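/- Let X = {0,1}^ℕ with the shift T, let W = {w_i}_{i∈I} (I ⊆ ℕ) be a finite or countable set of finite words, and let a = (a_i)_{i∈I} be non-negative numbers. Then the Bowen topological entropy of the recurrence set R(a;W) = {x ∈ X : R(x,[w_i]) = a_i for all i ∈ I} equals the maximum of h_μ over the set M(a,W) of T-invariant Borel probability measures μ with μ([w_i]) = a_i for all i ∈ I, the maximum being attained when M(a,W) is nonempty. -/

import Mathlib

open MeasureTheory Filter Topology Set
open scoped ENNReal NNReal

/-!  General definitions: Bowen topological entropy (via covers by Bowen balls),
measure-theoretic (Kolmogorov–Sinai) entropy, generic points, saturated systems,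
and the specification property. -/

variable {X : Type*}

/-- The Bowen ball of center `x`, order `n`, radius `ε` (for the metric
`d_n(x,y) = max_{0 ≤ j < n} d(T^j x, T^j y)`). -/
def bowenBall [PseudoMetricSpace X] (T : X → X) (x : X) (n : ℕ) (ε : ℝ) : Set X :=
  {y | ∀ j < n, dist (T^[j] x) (T^[j] y) < ε}

/-- `H_n^s(Z,ε)`: infimum of `Σ_i exp(-s n_i)` over countable covers of `Z` by Bowen balls
`B_{n_i}(x_i,ε)` with all `n_i ≥ n`. -/
noncomputable def bowenH [PseudoMetricSpace X] (T : X → X) (Z : Set X) (s ε : ℝ) (n : ℕ) :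
    ℝ≥0∞ :=
  ⨅ (C : Set (X × ℕ)) (_ : C.Countable) (_ : ∀ p ∈ C, n ≤ p.2)
    (_ : Z ⊆ ⋃ p ∈ C, bowenBall T p.1 p.2 ε),
    ∑' p : C, ENNReal.ofReal (Real.exp (-s * ((p : X × ℕ).2 : ℝ)))

/-- `h_top(Z,ε)`: the critical exponent of `s ↦ H^s(Z,ε) = sup_n H_n^s(Z,ε)`. -/
noncomputable def bowenEntropyRes [PseudoMetricSpace X] (T : X → X) (Z : Set X) (ε : ℝ) :
    ℝ≥0∞ :=
  sInf ((fun s : ℝ≥0 => (s : ℝ≥0∞)) '' {s : ℝ≥0 | (⨆ n, bowenH T Z (s : ℝ) ε n) = 0})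

/-- Bowen topological entropy of a subset `Z`: `h_top(Z) = lim_{ε → 0} h_top(Z,ε)`
(the limit being a supremum by monotonicity in `ε`). -/
noncomputable def bowenEntropy [PseudoMetricSpace X] (T : X → X) (Z : Set X) : ℝ≥0∞ :=
  ⨆ (ε : ℝ) (_ : 0 < ε), bowenEntropyRes T Z ε

/-- Entropy of the partition `P ∨ T⁻¹P ∨ ⋯ ∨ T⁻⁽ⁿ⁻¹⁾P`, where a countable partition is
encoded as a function `P : X → ℕ`: it is the Shannon entropy of the map
`x ↦ (P x, P (T x), …, P (Tⁿ⁻¹ x))`. -/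
noncomputable def partInfo [MeasurableSpace X] (T : X → X) (μ : Measure X) (P : X → ℕ)
    (n : ℕ) : ℝ≥0∞ :=
  ∑' l : List ℕ, ENNReal.ofReal (Real.negMulLog
    ((μ ((fun x => (List.range n).map fun j => P (T^[j] x)) ⁻¹' {l})).toReal))

/-- Measure-theoretic (Kolmogorov–Sinai) entropy `h_μ(T)`: supremum over finite measurable
partitions `P` of `lim_n (1/n) H_μ(P ∨ T⁻¹P ∨ ⋯ ∨ T⁻⁽ⁿ⁻¹⁾P)` (the limit exists by
subadditivity, so it may be written as a `liminf`). -/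
noncomputable def ksEntropy [MeasurableSpace X] (T : X → X) (μ : Measure X) : ℝ≥0∞ :=
  ⨆ (P : X → ℕ) (_ : Measurable P) (_ : (Set.range P).Finite),
    Filter.atTop.liminf fun n : ℕ => partInfo T μ P n / (n : ℝ≥0∞)

/-- `x` is a generic point for `μ` : the empirical measures `(1/n) Σ_{j<n} δ_{T^j x}`
converge to `μ` in the weak-star topology, i.e. Birkhoff averages of every continuous
function converge to its integral. -/
def IsGeneric [TopologicalSpace X] [MeasurableSpace X] (T : X → X) (μ : Measure X)
    (x : X) : Prop :=
  ∀ f : C(X, ℝ), Tendsto (fun n : ℕ => (∑ j ∈ Finset.range n, f (T^[j] x)) / (n : ℝ))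
    atTop (𝓝 (∫ y, f y ∂μ))

/-- `μ ∈ V(x)` : `μ` is a weak-star limit point of the empirical measures of `x`. -/
def IsLimitMeasure [TopologicalSpace X] [MeasurableSpace X] (T : X → X) (x : X)
    (μ : Measure X) : Prop :=
  ∃ φ : ℕ → ℕ, StrictMono φ ∧ ∀ f : C(X, ℝ),
    Tendsto (fun m : ℕ => (∑ j ∈ Finset.range (φ m), f (T^[j] x)) / (φ m : ℝ))
      atTop (𝓝 (∫ y, f y ∂μ))

/-- A system is saturated if `h_top(G_μ) = h_μ` for every invariant Borel probability
measure `μ`. -/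
def Saturated [PseudoMetricSpace X] [MeasurableSpace X] (T : X → X) : Prop :=
  ∀ μ : Measure X, IsProbabilityMeasure μ → MeasurePreserving T μ μ →
    bowenEntropy T {x | IsGeneric T μ x} = ksEntropy T μ

/-- The specification property. -/
def SpecificationProperty [PseudoMetricSpace X] (T : X → X) : Prop :=
  ∀ ε : ℝ, 0 < ε → ∃ m : ℕ, 1 ≤ m ∧
    ∀ k : ℕ, 2 ≤ k → ∀ x : ℕ → X, ∀ a b : ℕ → ℕ,
      (∀ i < k, a i ≤ b i) →
      (∀ i, i + 1 < k → b i + m ≤ a (i + 1)) →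
      ∃ y : X, ∀ i < k, ∀ n ≤ b i - a i,
        dist (T^[a i + n] y) (T^[n] (x i)) < ε

/-! Symbolic dynamics on `X = {0,1}^ℕ`. -/

/-- The metric `d(x,y) = (1/2)^(first difference)` on the symbolic space `{0,1}^ℕ`. -/
noncomputable instance : MetricSpace (ℕ → Bool) := PiNat.metricSpace

/-- The shift map on `{0,1}^ℕ`. -/
def shift : (ℕ → Bool) → ℕ → Bool := fun x n => x (n + 1)

/-- The cylinder `[w]` of all sequences beginning with the finite word `w`. -/
def cyl (w : List Bool) : Set (ℕ → Bool) :=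
  {x | ∀ i : Fin w.length, x i.1 = w.get i}

/-- `R(x,[w]) = r` : the frequency of visits of the orbit of `x` to the cylinder `[w]`
exists and equals `r`. -/
def hasFreq (w : List Bool) (x : ℕ → Bool) (r : ℝ) : Prop :=
  Filter.Tendsto (fun n : ℕ =>
      (∑ j ∈ Finset.range n, (cyl w).indicator (fun _ => (1 : ℝ)) (shift^[j] x)) / (n : ℝ))
    Filter.atTop (nhds r)

/-!
The coordinate partition is a generator, so `h_μ` is the infimum over `n` of `H_n(μ) / n`, where
`H_n` is the Shannon entropy of words of length `n`. On the shift each `H_n` is continuous in `μ`;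
hence the entropy is upper semicontinuous and attains its maximum on the compact set `M(a, W)`.

Upper bound (Bowen): every weak limit of the empirical measures of a point of `R(a; W)` lies in
`M(a, W)`, so arbitrarily long initial words of the point have small empirical conditional entropy
of a symbol given the preceding block. A maximum likelihood argument over Markov types shows that
there are few such words, and they provide efficient covers by Bowen balls.

Lower bound: for `μ ∈ M(a, W)` concatenate independent `μ`-distributed words of lengths
`1, 3, 5, …`. As `1 + 3 + ⋯ + (2 i - 1) = i ^ 2` grows faster than the number `i` of junctions,
Hoeffding's inequality and Borel–Cantelli give both the prescribed frequencies and local entropy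
`h_μ` almost surely, and the mass distribution principle applies.
-/

/-! ### Shannon entropy -/

section Shannon

variable {Ω A B : Type*} [MeasurableSpace Ω]

/-- Shannon entropy of the law of a map `f` with countably many values. -/
noncomputable def shannon (μ : Measure Ω) (f : Ω → A) : ℝ≥0∞ :=
  ∑' a, ENNReal.ofReal (Real.negMulLog (μ.real (f ⁻¹' {a})))

/-- Information function of `f`: minus the logarithm of the probability of the value of `f` at
the given point. Its mean is the Shannon entropy of `f`. -/
noncomputable def info (μ : Measure Ω) (f : Ω → A) (x : Ω) : ℝ :=
  -Real.log (μ.real (f ⁻¹' {f x}))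

variable {μ : Measure Ω}

lemma info_nonneg [IsProbabilityMeasure μ] (f : Ω → A) (x : Ω) : 0 ≤ info μ f x :=
  neg_nonneg.2 (Real.log_nonpos measureReal_nonneg measureReal_le_one)

lemma shannon_comp_injective (f : Ω → A) {e : A → B} (he : Function.Injective e) :
    shannon μ (e ∘ f) = shannon μ f := by
  have hfiber (a : A) : e ∘ f ⁻¹' {e a} = f ⁻¹' {a} := by
    ext x
    simp [he.eq_iff]
  unfold shannon
  rw [← he.tsum_eq]
  · simp only [hfiber]
  · intro b hb
    contrapose! hb
    have hempty : e ∘ f ⁻¹' {b} = ∅ :=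
      eq_empty_of_forall_notMem fun x hx => hb ⟨f x, hx⟩
    simp [hempty]

lemma shannon_ne_top [Finite A] (f : Ω → A) : shannon μ f ≠ ∞ := by
  have := Fintype.ofFinite A
  rw [shannon, tsum_fintype]
  exact ENNReal.sum_ne_top.2 fun a _ => ENNReal.ofReal_ne_top

lemma ae_measureReal_fiber_pos [IsFiniteMeasure μ] [Countable A] (f : Ω → A) :
    ∀ᵐ x ∂μ, 0 < μ.real (f ⁻¹' {f x}) := by
  have hnull : μ (f ⁻¹' {a | μ (f ⁻¹' {a}) = 0}) = 0 :=
    (measure_preimage_eq_zero_iff_of_countable (to_countable _)).2 fun _ ha => ha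
  filter_upwards [measure_eq_zero_iff_ae_notMem.1 hnull] with x hx
  exact ENNReal.toReal_pos hx (measure_ne_top _ _)

/-- The logarithm is bounded by its tangent at `1`, which is used at the density of the product
of the marginals with respect to the joint law. -/
lemma info_prodMk_add_one_le [IsFiniteMeasure μ] [Countable A] [Countable B]
    (f : Ω → A) (g : Ω → B) :
    ∀ᵐ x ∂μ, info μ (fun y => (f y, g y)) x + 1 ≤ info μ f x + info μ g x +
      μ.real (f ⁻¹' {f x}) * μ.real (g ⁻¹' {g x}) /
        μ.real ((fun y => (f y, g y)) ⁻¹' {(f x, g x)}) := by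
  filter_upwards [ae_measureReal_fiber_pos (μ := μ) f, ae_measureReal_fiber_pos (μ := μ) g,
    ae_measureReal_fiber_pos (μ := μ) fun y => (f y, g y)] with x hf hg hfg
  have hlog := Real.log_le_sub_one_of_pos (div_pos (mul_pos hf hg) hfg)
  rw [Real.log_div (mul_pos hf hg).ne' hfg.ne', Real.log_mul hf.ne' hg.ne'] at hlog
  simp only [info]
  linarith

variable [MeasurableSpace A] [DiscreteMeasurableSpace A] [MeasurableSpace B]
  [DiscreteMeasurableSpace B] {f : Ω → A} {g : Ω → B}

lemma shannon_comp_measurePreserving {T : Ω → Ω} (hT : MeasurePreserving T μ μ)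
    (hf : Measurable f) : shannon μ (f ∘ T) = shannon μ f :=
  tsum_congr fun a => by
    rw [preimage_comp, Measure.real, Measure.real,
      hT.measure_preimage (hf MeasurableSet.of_discrete).nullMeasurableSet]

variable [Countable A] [Countable B]

lemma lintegral_comp_eq_tsum (hf : Measurable f) (φ : A → ℝ≥0∞) :
    ∫⁻ x, φ (f x) ∂μ = ∑' a, φ a * μ (f ⁻¹' {a}) := by
  rw [← lintegral_map (measurable_of_countable φ) hf, lintegral_countable']
  simp only [Measure.map_apply hf MeasurableSet.of_discrete]

lemma tsum_measure_fiber [IsProbabilityMeasure μ] (hf : Measurable f) :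
    ∑' a, μ (f ⁻¹' {a}) = 1 := by
  simpa using (lintegral_comp_eq_tsum (μ := μ) hf 1).symm

lemma measurable_info (hf : Measurable f) : Measurable (info μ f) :=
  (measurable_of_countable fun a => -Real.log (μ.real (f ⁻¹' {a}))).comp hf

variable [IsProbabilityMeasure μ]

lemma shannon_eq_lintegral_info (hf : Measurable f) :
    shannon μ f = ∫⁻ x, ENNReal.ofReal (info μ f x) ∂μ := by
  refine Eq.trans (tsum_congr fun a => ?_) (lintegral_comp_eq_tsum hf fun a =>
    ENNReal.ofReal (-Real.log (μ.real (f ⁻¹' {a})))).symm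
  rw [Real.negMulLog, neg_mul_comm, mul_comm, ENNReal.ofReal_mul' measureReal_nonneg,
    ofReal_measureReal]

lemma toReal_shannon (hf : Measurable f) : (shannon μ f).toReal = ∫ x, info μ f x ∂μ := by
  rw [shannon_eq_lintegral_info hf, integral_eq_lintegral_of_nonneg_ae
    (ae_of_all _ (info_nonneg f)) (measurable_info hf).aestronglyMeasurable]

lemma integrable_info {A : Type*} [MeasurableSpace A] [DiscreteMeasurableSpace A] [Finite A]
    {f : Ω → A} (hf : Measurable f) : Integrable (info μ f) μ := by
  refine ⟨(measurable_info hf).aestronglyMeasurable, ?_⟩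
  rw [hasFiniteIntegral_iff_ofReal (ae_of_all _ (info_nonneg f)), ← shannon_eq_lintegral_info hf]
  exact (shannon_ne_top f).lt_top

lemma shannon_comp_le (hf : Measurable f) (e : A → B) : shannon μ (e ∘ f) ≤ shannon μ f := by
  rw [shannon_eq_lintegral_info hf,
    shannon_eq_lintegral_info ((measurable_of_countable e).comp hf)]
  refine lintegral_mono_ae ?_
  filter_upwards [ae_measureReal_fiber_pos (μ := μ) f] with x hx
  refine ENNReal.ofReal_le_ofReal (neg_le_neg (Real.log_le_log hx (measureReal_mono ?_)))
  rintro y (hy : f y = f x)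
  exact congrArg e hy

lemma lintegral_density_prodMk_le (hf : Measurable f) (hg : Measurable g) :
    ∫⁻ x, ENNReal.ofReal (μ.real (f ⁻¹' {f x}) * μ.real (g ⁻¹' {g x}) /
      μ.real ((fun y => (f y, g y)) ⁻¹' {(f x, g x)})) ∂μ ≤ 1 := by
  rw [lintegral_comp_eq_tsum (hf.prodMk hg) fun c => ENNReal.ofReal (μ.real (f ⁻¹' {c.1}) *
    μ.real (g ⁻¹' {c.2}) / μ.real ((fun y => (f y, g y)) ⁻¹' {c}))]
  calc _ ≤ ∑' c : A × B, μ (f ⁻¹' {c.1}) * μ (g ⁻¹' {c.2}) := by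
        refine ENNReal.tsum_le_tsum fun c => ?_
        rw [← ofReal_measureReal, ← ENNReal.ofReal_mul (by positivity),
          ← ofReal_measureReal (s := f ⁻¹' {c.1}), ← ofReal_measureReal (s := g ⁻¹' {c.2}),
          ← ENNReal.ofReal_mul measureReal_nonneg]
        rw [div_mul_eq_mul_div, mul_div_assoc]
        exact ENNReal.ofReal_le_ofReal
          (mul_le_of_le_one_right (by positivity) (div_self_le_one _))
    _ = 1 := by
      simp only [ENNReal.tsum_prod', ENNReal.tsum_mul_left, tsum_measure_fiber hg, mul_one,
        tsum_measure_fiber hf]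

lemma shannon_prodMk_le (hf : Measurable f) (hg : Measurable g) :
    shannon μ (fun x => (f x, g x)) ≤ shannon μ f + shannon μ g := by
  have hfg := hf.prodMk hg
  refine (ENNReal.add_le_add_iff_right ENNReal.one_ne_top).1 ?_
  calc shannon μ (fun x => (f x, g x)) + 1
      = ∫⁻ x, ENNReal.ofReal (info μ (fun y => (f y, g y)) x + 1) ∂μ := by
        simp_rw [ENNReal.ofReal_add (info_nonneg _ _) zero_le_one, ENNReal.ofReal_one]
        rw [lintegral_add_right _ measurable_const, ← shannon_eq_lintegral_info hfg]
        simp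
    _ ≤ ∫⁻ x, ENNReal.ofReal (info μ f x + info μ g x +
          μ.real (f ⁻¹' {f x}) * μ.real (g ⁻¹' {g x}) /
            μ.real ((fun y => (f y, g y)) ⁻¹' {(f x, g x)})) ∂μ :=
        lintegral_mono_ae <| (info_prodMk_add_one_le f g).mono fun _ hx =>
          ENNReal.ofReal_le_ofReal hx
    _ ≤ ∫⁻ x, (ENNReal.ofReal (info μ f x) + ENNReal.ofReal (info μ g x) +
          ENNReal.ofReal (μ.real (f ⁻¹' {f x}) * μ.real (g ⁻¹' {g x}) /
            μ.real ((fun y => (f y, g y)) ⁻¹' {(f x, g x)}))) ∂μ :=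
        lintegral_mono fun _ => ENNReal.ofReal_add_le.trans <|
          add_le_add_left ENNReal.ofReal_add_le _
    _ ≤ shannon μ f + shannon μ g + 1 := by
        have hmf : Measurable fun x => ENNReal.ofReal (info μ f x) :=
          (measurable_info hf).ennreal_ofReal
        have hmfg : Measurable fun x =>
            ENNReal.ofReal (info μ f x) + ENNReal.ofReal (info μ g x) :=
          hmf.add (measurable_info hg).ennreal_ofReal
        rw [lintegral_add_left hmfg, lintegral_add_left hmf, ← shannon_eq_lintegral_info hf,
          ← shannon_eq_lintegral_info hg]
        gcongr
        exact lintegral_density_prodMk_le hf hg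

lemma shannon_add_le {G : Type*} [AddGroup G] [Countable G] [MeasurableSpace G]
    [DiscreteMeasurableSpace G] {f g : Ω → G} (hf : Measurable f) (hg : Measurable g) :
    shannon μ (f + g) ≤ shannon μ f + shannon μ g :=
  (shannon_comp_le (hf.prodMk hg) fun p : G × G => p.1 + p.2).trans (shannon_prodMk_le hf hg)

lemma exists_pos_forall_negMulLog_le {ε : ℝ} (hε : 0 < ε) :
    ∃ δ > 0, ∀ p : ℝ, |p| ≤ δ ∨ |1 - p| ≤ δ → Real.negMulLog p ≤ ε := by
  have hnear (c : ℝ) (hc : Real.negMulLog c = 0) :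
      ∃ δ > 0, ∀ p : ℝ, dist p c < δ → Real.negMulLog p < ε :=
    Metric.eventually_nhds_iff.1 <|
      (Real.continuous_negMulLog.tendsto c).eventually_lt_const (by rwa [hc])
  obtain ⟨δ₀, hδ₀, h₀⟩ := hnear 0 Real.negMulLog_zero
  obtain ⟨δ₁, hδ₁, h₁⟩ := hnear 1 Real.negMulLog_one
  refine ⟨min δ₀ δ₁ / 2, by positivity, fun p hp => ?_⟩
  have hlt : min δ₀ δ₁ / 2 < min δ₀ δ₁ := half_lt_self (by positivity)
  rcases hp with hp | hp
  · exact (h₀ p (by simpa using (hp.trans_lt hlt).trans_le (min_le_left _ _))).le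
  · refine (h₁ p ?_).le
    rw [Real.dist_eq, abs_sub_comm]
    exact (hp.trans_lt hlt).trans_le (min_le_right _ _)

omit [Countable A] in
lemma exists_forall_shannon_le_of_measure_ne_le [Finite A] (a₀ : A) {ε : ℝ} (hε : 0 < ε) :
    ∃ δ > 0, ∀ f : Ω → A, Measurable f → μ {x | f x ≠ a₀} ≤ ENNReal.ofReal δ →
      shannon μ f ≤ ENNReal.ofReal ε := by
  have := Fintype.ofFinite A
  have hcard : (0 : ℝ) < Fintype.card A := Nat.cast_pos.2 (Fintype.card_pos_iff.2 ⟨a₀⟩)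
  obtain ⟨δ, hδ, hlog⟩ := exists_pos_forall_negMulLog_le (div_pos hε hcard)
  refine ⟨δ, hδ, fun f hf hle => ?_⟩
  have hreal : μ.real {x | f x ≠ a₀} ≤ δ := ENNReal.toReal_le_of_le_ofReal hδ.le hle
  have hfiber (a : A) : |μ.real (f ⁻¹' {a})| ≤ δ ∨ |1 - μ.real (f ⁻¹' {a})| ≤ δ := by
    rcases eq_or_ne a a₀ with rfl | ha
    · have hcompl : 1 - μ.real (f ⁻¹' {a}) = μ.real {x | f x ≠ a} :=
        (probReal_compl_eq_one_sub (hf (MeasurableSet.of_discrete (s := {a})))).symm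
      exact .inr (by rwa [hcompl, abs_of_nonneg measureReal_nonneg])
    · rw [abs_of_nonneg measureReal_nonneg]
      refine .inl ((measureReal_mono ?_).trans hreal)
      rintro x rfl
      exact ha
  calc shannon μ f = ∑ a, ENNReal.ofReal (Real.negMulLog (μ.real (f ⁻¹' {a}))) :=
        tsum_fintype _
    _ ≤ ∑ _a : A, ENNReal.ofReal (ε / Fintype.card A) :=
        Finset.sum_le_sum fun a _ => ENNReal.ofReal_le_ofReal (hlog _ (hfiber a))
    _ = ENNReal.ofReal ε := by
      rw [Finset.sum_const, Finset.card_univ, ← ENNReal.ofReal_nsmul, nsmul_eq_mul,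
        mul_div_cancel₀ _ hcard.ne']

end Shannon

/-! ### The Kolmogorov–Sinai theorem on generators -/

section Itinerary

variable {Ω A B : Type*}

/-- The first `n` symbols seen by the observable `ξ` along the orbit of a point. -/
def itinerary (T : Ω → Ω) (ξ : Ω → A) (n : ℕ) (x : Ω) : Fin n → A := fun j => ξ (T^[j] x)

lemma itinerary_add (T : Ω → Ω) (ξ : Ω → A) (m n : ℕ) (x : Ω) :
    itinerary T ξ (m + n) x =
      Fin.append (itinerary T ξ m x) (itinerary T ξ n (T^[m] x)) := by
  funext i
  refine Fin.addCases (fun i => ?_) (fun i => ?_) i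
  · simp [itinerary]
  · simp [itinerary, add_comm m, Function.iterate_add_apply]

lemma exists_itinerary_preimage_eq (T : Ω → Ω) (ξ : Ω → A) {m n : ℕ} (hmn : m ≤ n)
    (B : Set (Fin m → A)) : ∃ B', itinerary T ξ m ⁻¹' B = itinerary T ξ n ⁻¹' B' :=
  ⟨(fun u => u ∘ Fin.castLE hmn) ⁻¹' B, rfl⟩

variable [MeasurableSpace Ω]

lemma measurable_itinerary [MeasurableSpace A] {T : Ω → Ω} (hT : Measurable T) {ξ : Ω → A}
    (hξ : Measurable ξ) (n : ℕ) : Measurable (itinerary T ξ n) :=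
  measurable_pi_lambda _ fun j => hξ.comp (hT.iterate j)

/-- Entropy of the partition into itineraries of length `n`. -/
noncomputable def blockEntropy (T : Ω → Ω) (μ : Measure Ω) (ξ : Ω → A) (n : ℕ) : ℝ≥0∞ :=
  shannon μ (itinerary T ξ n)

lemma partInfo_eq_blockEntropy (T : Ω → Ω) (μ : Measure Ω) (P : Ω → ℕ) (n : ℕ) :
    partInfo T μ P n = blockEntropy T μ P n := by
  have hlist : (fun x => (List.range n).map fun j => P (T^[j] x)) =
      List.ofFn ∘ itinerary T P n := by
    funext x
    simp [itinerary, List.ofFn_eq_map, ← List.map_coe_finRange_eq_range, Function.comp_def]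
  calc partInfo T μ P n = shannon μ (List.ofFn ∘ itinerary T P n) := by rw [← hlist]; rfl
    _ = blockEntropy T μ P n := shannon_comp_injective _ List.ofFn_injective

lemma blockEntropy_comp_injective (T : Ω → Ω) (μ : Measure Ω) (ξ : Ω → A) {e : A → B}
    (he : Function.Injective e) (n : ℕ) :
    blockEntropy T μ (e ∘ ξ) n = blockEntropy T μ ξ n :=
  shannon_comp_injective (itinerary T ξ n) he.comp_left

lemma blockEntropy_ne_top [Finite A] (T : Ω → Ω) (μ : Measure Ω) (ξ : Ω → A) (n : ℕ) :
    blockEntropy T μ ξ n ≠ ∞ :=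
  shannon_ne_top _

variable {T : Ω → Ω} {μ : Measure Ω} [IsProbabilityMeasure μ] {ξ : Ω → A}

lemma blockEntropy_zero (T : Ω → Ω) (ξ : Ω → A) : blockEntropy T μ ξ 0 = 0 := by
  have huniv (u : Fin 0 → A) : itinerary T ξ 0 ⁻¹' {u} = univ :=
    eq_univ_of_forall fun x => Subsingleton.elim _ _
  simp [blockEntropy, shannon, huniv]

variable [Countable A] [MeasurableSpace A] [DiscreteMeasurableSpace A]

lemma blockEntropy_add_le (hμ : MeasurePreserving T μ μ) (hξ : Measurable ξ) (m n : ℕ) :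
    blockEntropy T μ ξ (m + n) ≤ blockEntropy T μ ξ m + blockEntropy T μ ξ n := by
  have hm := measurable_itinerary hμ.measurable hξ m
  have hn := measurable_itinerary hμ.measurable hξ n
  calc blockEntropy T μ ξ (m + n)
      = shannon μ ((fun p : (Fin m → A) × (Fin n → A) => Fin.append p.1 p.2) ∘
          fun x => (itinerary T ξ m x, (itinerary T ξ n ∘ T^[m]) x)) :=
        congrArg _ (funext (itinerary_add T ξ m n))
    _ ≤ shannon μ (itinerary T ξ m) + shannon μ (itinerary T ξ n ∘ T^[m]) := by
        have hnm := hn.comp (hμ.measurable.iterate m)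
        exact (shannon_comp_le (hm.prodMk hnm) _).trans (shannon_prodMk_le hm hnm)
    _ = blockEntropy T μ ξ m + blockEntropy T μ ξ n := by
        rw [shannon_comp_measurePreserving (hμ.iterate m) hn]
        rfl

lemma blockEntropy_le_mul_shannon (hμ : MeasurePreserving T μ μ) (hξ : Measurable ξ) (n : ℕ) :
    blockEntropy T μ ξ n ≤ n * shannon μ ξ := by
  induction n with
  | zero => simp [blockEntropy_zero]
  | succ n ih =>
    have hone : blockEntropy T μ ξ 1 = shannon μ ((fun a (_ : Fin 1) => a) ∘ ξ) :=
      congrArg _ (funext fun x => funext fun j => by simp [itinerary])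
    rw [Nat.cast_succ, add_one_mul]
    refine (blockEntropy_add_le hμ hξ n 1).trans (add_le_add ih ?_)
    exact hone.trans_le (shannon_comp_le hξ _)

end Itinerary

section Generator

variable {Ω A : Type*} [MeasurableSpace Ω] {T : Ω → Ω} {μ : Measure Ω} {ξ : Ω → A}

/-- The observable `ξ` generates: the `σ`-algebra of `Ω` is generated by `ξ, ξ ∘ T, ξ ∘ T², …`. -/
def IsGenerator [MeasurableSpace A] (T : Ω → Ω) (ξ : Ω → A) : Prop :=
  ‹MeasurableSpace Ω› ≤ ⨆ j : ℕ, MeasurableSpace.comap (ξ ∘ T^[j]) inferInstance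

/-- Sets determined by an itinerary of finite length. -/
def itineraryCylinders (T : Ω → Ω) (ξ : Ω → A) : Set (Set Ω) :=
  {s | ∃ n B, s = itinerary T ξ n ⁻¹' B}

omit [MeasurableSpace Ω] in
lemma isSetRing_itineraryCylinders (T : Ω → Ω) (ξ : Ω → A) :
    IsSetRing (itineraryCylinders T ξ) := by
  have hcommon {s t : Set Ω} (hs : s ∈ itineraryCylinders T ξ)
      (ht : t ∈ itineraryCylinders T ξ) :
      ∃ n B C, s = itinerary T ξ n ⁻¹' B ∧ t = itinerary T ξ n ⁻¹' C := by
    obtain ⟨m, B, rfl⟩ := hs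
    obtain ⟨n, C, rfl⟩ := ht
    obtain ⟨B', hB⟩ := exists_itinerary_preimage_eq T ξ (le_max_left m n) B
    obtain ⟨C', hC⟩ := exists_itinerary_preimage_eq T ξ (le_max_right m n) C
    exact ⟨max m n, B', C', hB, hC⟩
  refine ⟨⟨0, ∅, rfl⟩, fun _ _ hs ht => ?_, fun _ _ hs ht => ?_⟩ <;>
    obtain ⟨n, B, C, rfl, rfl⟩ := hcommon hs ht
  · exact ⟨n, B ∪ C, rfl⟩
  · exact ⟨n, B \ C, rfl⟩

variable [Finite A] [MeasurableSpace A] [DiscreteMeasurableSpace A]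

lemma generateFrom_itineraryCylinders (hgen : IsGenerator T ξ) (hT : Measurable T)
    (hξ : Measurable ξ) :
    ‹MeasurableSpace Ω› = MeasurableSpace.generateFrom (itineraryCylinders T ξ) := by
  refine le_antisymm (hgen.trans (iSup_le fun j => ?_)) (MeasurableSpace.generateFrom_le ?_)
  · rintro _ ⟨s, -, rfl⟩
    exact MeasurableSpace.measurableSet_generateFrom
      ⟨j + 1, {u | u (Fin.last j) ∈ s}, rfl⟩
  · rintro _ ⟨n, B, rfl⟩
    exact measurable_itinerary hT hξ n MeasurableSet.of_discrete

lemma exists_measure_ne_comp_itinerary_le [IsFiniteMeasure μ] (hgen : IsGenerator T ξ)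
    (hT : Measurable T) (hξ : Measurable ξ) {V : Type*} [Finite V] [Nonempty V]
    [MeasurableSpace V] [DiscreteMeasurableSpace V] {P : Ω → V} (hP : Measurable P)
    {δ : ℝ≥0∞} (hδ : 0 < δ) :
    ∃ k, ∃ q : (Fin k → A) → V, μ {x | P x ≠ q (itinerary T ξ k x)} ≤ δ := by
  classical
  have := Fintype.ofFinite V
  obtain ⟨η, hη, hsum⟩ := ENNReal.exists_pos_sum_of_countable hδ.ne' V
  have happrox (v : V) : ∃ s ∈ itineraryCylinders T ξ, μ (symmDiff s (P ⁻¹' {v})) < η v :=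
    exists_measure_symmDiff_lt_of_generateFrom_isSetRing (isSetRing_itineraryCylinders T ξ)
      ⟨{univ}, countable_singleton _, singleton_subset_iff.2 ⟨0, univ, rfl⟩, by simp⟩
      (generateFrom_itineraryCylinders hgen hT hξ) (hP MeasurableSet.of_discrete)
      (by exact_mod_cast hη v)
  choose s hs hμs using happrox
  choose n B hB using hs
  choose C hC using fun v =>
    exists_itinerary_preimage_eq T ξ (Finset.le_sup (f := n) (Finset.mem_univ v)) (B v)
  refine ⟨Finset.univ.sup n, fun u => if h : ∃ v, u ∈ C v then h.choose else Classical.arbitrary V,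
    ?_⟩
  calc _ ≤ μ (⋃ v, symmDiff (s v) (P ⁻¹' {v})) := measure_mono fun x hx => ?_
    _ ≤ ∑' v, μ (symmDiff (s v) (P ⁻¹' {v})) := measure_iUnion_le _
    _ ≤ ∑' v, (η v : ℝ≥0∞) := ENNReal.tsum_le_tsum fun v => (hμs v).le
    _ ≤ δ := hsum.le
  contrapose! hx
  have hmem (v : V) : itinerary T ξ (Finset.univ.sup n) x ∈ C v ↔ P x = v := by
    have hxs : x ∈ s v ↔ itinerary T ξ (Finset.univ.sup n) x ∈ C v := by
      rw [hB, hC]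
      rfl
    have hnot : x ∉ symmDiff (s v) (P ⁻¹' {v}) := fun h => hx (mem_iUnion.2 ⟨v, h⟩)
    rw [Set.mem_symmDiff, hxs, mem_preimage, mem_singleton_iff] at hnot
    tauto
  simp [hmem]

variable [IsProbabilityMeasure μ]

/-- Rokhlin's estimate, by writing `P` as a function of a long itinerary of `ξ` plus an error
term which rarely differs from `0`, hence has small entropy. -/
lemma exists_forall_blockEntropy_le_add (hgen : IsGenerator T ξ) (hμ : MeasurePreserving T μ μ)
    (hξ : Measurable ξ) {G : Type*} [AddGroup G] [Finite G] [MeasurableSpace G]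
    [DiscreteMeasurableSpace G] {P : Ω → G} (hP : Measurable P) {ε : ℝ} (hε : 0 < ε) :
    ∃ k, ∀ n, blockEntropy T μ P n ≤ blockEntropy T μ ξ (n + k) + n * ENNReal.ofReal ε := by
  obtain ⟨δ, hδ, hsmall⟩ :=
    exists_forall_shannon_le_of_measure_ne_le (μ := μ) (0 : G) hε
  obtain ⟨k, q, hq⟩ := exists_measure_ne_comp_itinerary_le (μ := μ) hgen hμ.measurable hξ hP
    (ENNReal.ofReal_pos.2 hδ)
  set Q : Ω → G := q ∘ itinerary T ξ k with hQ
  have hmQ : Measurable Q :=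
    (measurable_of_countable q).comp (measurable_itinerary hμ.measurable hξ k)
  have hmR : Measurable (P - Q) :=
    (measurable_of_countable fun p : G × G => p.1 - p.2).comp (hP.prodMk hmQ)
  have hR : shannon μ (P - Q) ≤ ENNReal.ofReal ε :=
    hsmall _ hmR (by simpa only [Pi.sub_apply, sub_ne_zero, hQ] using! hq)
  refine ⟨k, fun n => ?_⟩
  have hsplit : itinerary T P n = itinerary T (P - Q) n + itinerary T Q n := by
    funext x j
    simp [itinerary]
  have hfactor : itinerary T Q n =
      (fun u (j : Fin n) => q fun i => u ⟨i + j, by omega⟩) ∘ itinerary T ξ (n + k) := by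
    funext x j
    simp only [itinerary, hQ, Function.comp_apply, Function.iterate_add_apply]
    rfl
  calc blockEntropy T μ P n
      ≤ blockEntropy T μ (P - Q) n + shannon μ (itinerary T Q n) := by
        rw [blockEntropy, hsplit]
        exact shannon_add_le (measurable_itinerary hμ.measurable hmR n)
          (measurable_itinerary hμ.measurable hmQ n)
    _ ≤ n * ENNReal.ofReal ε + blockEntropy T μ ξ (n + k) := by
        gcongr
        · exact (blockEntropy_le_mul_shannon hμ hmR n).trans (by gcongr)
        · rw [hfactor]
          exact shannon_comp_le (measurable_itinerary hμ.measurable hξ _) _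
    _ = _ := add_comm _ _

/-- The entropy of `T` with respect to the partition given by `ξ`. By subadditivity the limit of
`blockEntropy T μ ξ n / n` is an infimum, which makes it upper semicontinuous in `μ`. -/
noncomputable def entropyRate (T : Ω → Ω) (μ : Measure Ω) (ξ : Ω → A) : ℝ≥0∞ :=
  ⨅ n : ℕ, blockEntropy T μ ξ (n + 1) / (n + 1 : ℕ)

lemma tendsto_blockEntropy_div (hμ : MeasurePreserving T μ μ) (hξ : Measurable ξ) :
    Tendsto (fun n : ℕ => blockEntropy T μ ξ n / n) atTop (𝓝 (entropyRate T μ ξ)) := by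
  have hsub : Subadditive fun n => (blockEntropy T μ ξ n).toReal := fun m n =>
    ENNReal.toReal_le_add (blockEntropy_add_le hμ hξ m n) (blockEntropy_ne_top T μ ξ m)
      (blockEntropy_ne_top T μ ξ n)
  have hbdd : BddBelow (range fun n : ℕ => (blockEntropy T μ ξ n).toReal / n) :=
    ⟨0, by rintro _ ⟨n, rfl⟩; positivity⟩
  have hreal {n : ℕ} (hn : 0 < n) :
      ENNReal.ofReal ((blockEntropy T μ ξ n).toReal / n) = blockEntropy T μ ξ n / n := by
    rw [ENNReal.ofReal_div_of_pos (Nat.cast_pos.2 hn), ENNReal.ofReal_natCast,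
      ENNReal.ofReal_toReal (blockEntropy_ne_top T μ ξ n)]
  have hlim : Tendsto (fun n : ℕ => blockEntropy T μ ξ n / n) atTop
      (𝓝 (ENNReal.ofReal hsub.lim)) :=
    (ENNReal.tendsto_ofReal (hsub.tendsto_lim hbdd)).congr' <|
      (eventually_gt_atTop 0).mono fun _ => hreal
  convert hlim using 2
  refine le_antisymm (ge_of_tendsto hlim ?_) (le_iInf fun n => ?_)
  · filter_upwards [eventually_gt_atTop 0] with n hn
    obtain ⟨m, rfl⟩ := Nat.exists_eq_add_one.2 hn
    exact iInf_le _ m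
  · rw [← hreal n.succ_pos]
    exact ENNReal.ofReal_le_ofReal (hsub.lim_le_div hbdd n.succ_ne_zero)

lemma entropyRate_le_ksEntropy (hμ : MeasurePreserving T μ μ) (hξ : Measurable ξ) :
    entropyRate T μ ξ ≤ ksEntropy T μ := by
  obtain ⟨e, he⟩ := Countable.exists_injective_nat A
  have hlim : Tendsto (fun n : ℕ => partInfo T μ (e ∘ ξ) n / n) atTop
      (𝓝 (entropyRate T μ ξ)) := by
    simpa only [partInfo_eq_blockEntropy, blockEntropy_comp_injective T μ ξ he] using
      tendsto_blockEntropy_div hμ hξ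
  rw [← hlim.liminf_eq]
  exact le_iSup_of_le (e ∘ ξ) <| le_iSup_of_le ((measurable_of_countable e).comp hξ) <|
    le_iSup_of_le ((finite_range e).subset (range_comp_subset_range ξ e)) le_rfl

lemma ksEntropy_le_entropyRate (hgen : IsGenerator T ξ) (hμ : MeasurePreserving T μ μ)
    (hξ : Measurable ξ) : ksEntropy T μ ≤ entropyRate T μ ξ := by
  refine iSup_le fun P => iSup_le fun hP => iSup_le fun hfin => ?_
  obtain ⟨N, hN⟩ := hfin.bddAbove
  set P' : Ω → Fin (N + 1) := fun x => Fin.ofNat (N + 1) (P x)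
  have hval : P = Fin.val ∘ P' := funext fun x =>
    (Nat.mod_eq_of_lt (Nat.lt_succ_of_le (hN ⟨x, rfl⟩))).symm
  have hmP' : Measurable P' := (measurable_of_countable (Fin.ofNat (N + 1))).comp hP
  refine ENNReal.le_of_forall_pos_le_add fun ε hε _ => ?_
  obtain ⟨k, hk⟩ := exists_forall_blockEntropy_le_add hgen hμ hξ hmP' (NNReal.coe_pos.2 hε)
  have hbound : ∀ᶠ n : ℕ in atTop, partInfo T μ P n / n ≤
      blockEntropy T μ ξ n / n + blockEntropy T μ ξ k / n + ε := by
    filter_upwards [eventually_gt_atTop 0] with n hn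
    rw [← ENNReal.add_div, ENNReal.div_le_iff (by positivity) (ENNReal.natCast_ne_top n),
      add_mul, ENNReal.div_mul_cancel (by positivity) (ENNReal.natCast_ne_top n),
      mul_comm (ε : ℝ≥0∞), partInfo_eq_blockEntropy, hval,
      blockEntropy_comp_injective T μ P' Fin.val_injective]
    refine (hk n).trans ?_
    rw [ENNReal.ofReal_coe_nnreal]
    gcongr
    exact blockEntropy_add_le hμ hξ n k
  have hconst : Tendsto (fun n : ℕ => blockEntropy T μ ξ k / n) atTop (𝓝 0) :=
    (ENNReal.Tendsto.const_div ENNReal.tendsto_nat_nhds_top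
      (.inr (blockEntropy_ne_top T μ ξ k))).trans (by simp)
  have hlim := ((tendsto_blockEntropy_div hμ hξ).add hconst).add_const (ε : ℝ≥0∞)
  rw [add_zero] at hlim
  exact (liminf_le_liminf hbound).trans_eq hlim.liminf_eq

theorem ksEntropy_eq_entropyRate (hgen : IsGenerator T ξ) (hμ : MeasurePreserving T μ μ)
    (hξ : Measurable ξ) : ksEntropy T μ = entropyRate T μ ξ :=
  (ksEntropy_le_entropyRate hgen hμ hξ).antisymm (entropyRate_le_ksEntropy hμ hξ)

end Generator

/-! ### Weak convergence, empirical measures and entropy -/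

section Weak

lemma apply_eq_of_mapClusterPt_of_tendsto {ι Y Z : Type*} [TopologicalSpace Y]
    [TopologicalSpace Z] [T2Space Z] {F : Filter ι} {u : ι → Y} {φ : Y → Z} {y : Y} {z : Z}
    (hy : MapClusterPt y F u) (hφ : Continuous φ) (hz : Tendsto (fun i => φ (u i)) F (𝓝 z)) :
    φ y = z :=
  eq_of_nhds_neBot ((hy.continuousAt_comp hφ.continuousAt).neBot.mono (inf_le_inf_left _ hz))

variable {Ω A : Type*} [TopologicalSpace Ω] {T : Ω → Ω} {ξ : Ω → A}

lemma continuous_itinerary [TopologicalSpace A] (hT : Continuous T) (hξ : Continuous ξ) (n : ℕ) :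
    Continuous (itinerary T ξ n) :=
  continuous_pi fun j => hξ.comp (hT.iterate j)

variable [MeasurableSpace Ω] [BorelSpace Ω] [HasOuterApproxClosed Ω]

lemma continuous_real_of_isClopen {s : Set Ω} (hs : IsClopen s) :
    Continuous fun μ : ProbabilityMeasure Ω => (μ : Measure Ω).real s :=
  continuous_iff_continuousAt.2 fun _ =>
    (NNReal.continuous_coe.tendsto _).comp <|
      ProbabilityMeasure.tendsto_measure_of_isClopen_of_tendsto tendsto_id hs

lemma measurePreserving_iff_integral_comp_eq (hT : Continuous T) {μ : Measure Ω}
    [IsFiniteMeasure μ] :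
    MeasurePreserving T μ μ ↔
      ∀ f : BoundedContinuousFunction Ω ℝ, ∫ x, f (T x) ∂μ = ∫ x, f x ∂μ := by
  have hmap (f : BoundedContinuousFunction Ω ℝ) :
      ∫ x, f x ∂(μ.map T) = ∫ x, f (T x) ∂μ :=
    integral_map hT.measurable.aemeasurable
      f.continuous.measurable.aestronglyMeasurable
  refine ⟨fun h f => by rw [← hmap, h.map_eq], fun h => ⟨hT.measurable, ?_⟩⟩
  exact ext_of_forall_integral_eq_of_IsFiniteMeasure fun f => (hmap f).trans (h f)

omit [HasOuterApproxClosed Ω] in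
lemma continuous_integral_comp_sub_integral (hT : Continuous T)
    (f : BoundedContinuousFunction Ω ℝ) :
    Continuous fun μ : ProbabilityMeasure Ω => ∫ x, f (T x) ∂μ - ∫ x, f x ∂μ :=
  (ProbabilityMeasure.continuous_integral_boundedContinuousFunction
    (f.compContinuous ⟨T, hT⟩)).sub
    (ProbabilityMeasure.continuous_integral_boundedContinuousFunction f)

lemma isClosed_setOf_measurePreserving (hT : Continuous T) :
    IsClosed {μ : ProbabilityMeasure Ω | MeasurePreserving T (μ : Measure Ω) μ} := by
  simp only [measurePreserving_iff_integral_comp_eq hT, ← sub_eq_zero (b := ∫ _, _ ∂_),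
    Set.ofPred_forall]
  exact isClosed_iInter fun f =>
    isClosed_eq (continuous_integral_comp_sub_integral hT f) continuous_const

variable [TopologicalSpace A] [DiscreteTopology A] [Finite A]

lemma continuous_blockEntropy (hT : Continuous T) (hξ : Continuous ξ) (n : ℕ) :
    Continuous fun μ : ProbabilityMeasure Ω => blockEntropy T μ ξ n := by
  have := Fintype.ofFinite (Fin n → A)
  simp only [blockEntropy, shannon, tsum_fintype]
  exact continuous_finsetSum _ fun u _ => ENNReal.continuous_ofReal.comp <|
    Real.continuous_negMulLog.comp <| continuous_real_of_isClopen <|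
      (isClopen_discrete {u}).preimage (continuous_itinerary hT hξ n)

lemma upperSemicontinuous_entropyRate (hT : Continuous T) (hξ : Continuous ξ) :
    UpperSemicontinuous fun μ : ProbabilityMeasure Ω => entropyRate T μ ξ :=
  upperSemicontinuous_iInf fun n => Continuous.upperSemicontinuous <|
    (ENNReal.continuous_div_const _ (by simp)).comp (continuous_blockEntropy hT hξ (n + 1))

lemma exists_forall_ksEntropy_le [MeasurableSpace A] [DiscreteMeasurableSpace A]
    (hgen : IsGenerator T ξ) (hT : Continuous T) (hξ : Continuous ξ)
    {K : Set (ProbabilityMeasure Ω)} (hK : IsCompact K) (hne : K.Nonempty)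
    (hinv : ∀ μ ∈ K, MeasurePreserving T (μ : Measure Ω) μ) :
    ∃ μ ∈ K, ∀ ν ∈ K, ksEntropy T (ν : Measure Ω) ≤ ksEntropy T (μ : Measure Ω) := by
  have hξ' : Measurable ξ := fun s _ =>
    ((isOpen_discrete s).preimage hξ).measurableSet
  obtain ⟨μ, hμ, hmax⟩ :=
    ((upperSemicontinuous_entropyRate hT hξ).upperSemicontinuousOn K).exists_isMaxOn hne hK
  refine ⟨μ, hμ, fun ν hν => ?_⟩
  rw [ksEntropy_eq_entropyRate hgen (hinv ν hν) hξ', ksEntropy_eq_entropyRate hgen (hinv μ hμ) hξ']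
  exact hmax hν

end Weak

section Empirical

variable {Ω : Type*} [MeasurableSpace Ω] (T : Ω → Ω) (x : Ω) (n : ℕ)

/-- The uniform distribution on the first `n + 1` points of the orbit of `x`; the shift by one
makes it a probability measure for every `n`. -/
noncomputable def empiricalMeasure : ProbabilityMeasure Ω where
  val := ((n + 1 : ℕ) : ℝ≥0∞)⁻¹ • ∑ j ∈ Finset.range (n + 1), Measure.dirac (T^[j] x)
  property := ⟨by simp [ENNReal.inv_mul_cancel]⟩

lemma integral_empiricalMeasure {f : Ω → ℝ} (hf : Measurable f) :
    ∫ y, f y ∂(empiricalMeasure T x n : Measure Ω) = birkhoffAverage ℝ T f (n + 1) x := by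
  have hint (j : ℕ) : Integrable f (Measure.dirac (T^[j] x)) :=
    integrable_dirac' hf.stronglyMeasurable enorm_lt_top
  simp only [empiricalMeasure, ProbabilityMeasure.coe_mk, integral_smul_measure,
    integral_finsetSum_measure fun j _ => hint j, integral_dirac' f _ hf.stronglyMeasurable,
    birkhoffAverage, birkhoffSum, ENNReal.toReal_inv, ENNReal.toReal_natCast]

lemma empiricalMeasure_real {s : Set Ω} (hs : MeasurableSet s) :
    (empiricalMeasure T x n : Measure Ω).real s =
      birkhoffAverage ℝ T (s.indicator 1) (n + 1) x := by
  rw [← integral_empiricalMeasure T x n (measurable_one.indicator hs), integral_indicator_one hs]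

variable [TopologicalSpace Ω] [BorelSpace Ω] [HasOuterApproxClosed Ω] {T x}

lemma measurePreserving_of_mapClusterPt (hT : Continuous T) {μ : ProbabilityMeasure Ω}
    (hμ : MapClusterPt μ atTop (empiricalMeasure T x)) :
    MeasurePreserving T (μ : Measure Ω) μ := by
  refine (measurePreserving_iff_integral_comp_eq hT).2 fun f => sub_eq_zero.1 ?_
  have hshift (n : ℕ) : ∫ y, f (T y) ∂(empiricalMeasure T x n : Measure Ω) =
      birkhoffAverage ℝ T f (n + 1) (T x) := by
    rw [integral_empiricalMeasure T x n (f := fun y => f (T y)) (f.continuous.comp hT).measurable]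
    simp only [birkhoffAverage, birkhoffSum, ← Function.iterate_succ_apply,
      Function.iterate_succ_apply']
  have hlim : Tendsto (fun n => ∫ y, f (T y) ∂(empiricalMeasure T x n : Measure Ω) -
      ∫ y, f y ∂(empiricalMeasure T x n : Measure Ω)) atTop (𝓝 0) := by
    simp only [hshift, integral_empiricalMeasure T x _ f.continuous.measurable]
    exact (tendsto_birkhoffAverage_apply_sub_birkhoffAverage' ℝ f.isBounded_range T x).comp
      (tendsto_add_atTop_nat 1)
  exact apply_eq_of_mapClusterPt_of_tendsto (u := empiricalMeasure T x) hμ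
    (continuous_integral_comp_sub_integral hT f) hlim

end Empirical

/-! ### Words of small empirical conditional entropy -/

section Counting

variable {A : Type*} {k n : ℕ}

/-- The subword of length `k + 1` of `u` at position `j`. -/
def block (u : Fin (k + n) → A) (j : Fin n) : Fin (k + 1) → A :=
  fun i => u ⟨j + i, by omega⟩

lemma block_snoc_castSucc (u : Fin (k + n) → A) (b : A) (j : Fin n) :
    block (n := n + 1) (Fin.snoc (n := k + n) u b) j.castSucc = block u j := by
  funext i
  have hlt : (j + i : ℕ) < k + n := by omega
  simp [block, Fin.snoc, hlt]

lemma block_snoc_last (u : Fin (k + n) → A) (b : A) :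
    block (n := n + 1) (Fin.snoc (n := k + n) u b) (Fin.last n) =
      Fin.snoc (fun i => u ⟨n + i, by omega⟩) b := by
  funext i
  refine Fin.lastCases ?_ (fun i => ?_) i
  · simp [block, Fin.snoc, add_comm]
  · have hlt : (n + i : ℕ) < k + n := by omega
    simp [block, Fin.snoc, hlt]

lemma block_itinerary {Ω : Type*} (T : Ω → Ω) (ξ : Ω → A) (x : Ω) (j : Fin n) :
    block (itinerary T ξ (k + n) x) j = itinerary T ξ (k + 1) (T^[j] x) := by
  funext i
  simp [block, itinerary, add_comm (j : ℕ), Function.iterate_add_apply]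

variable [Fintype A]

lemma sum_prod_block_le {q : (Fin (k + 1) → A) → ℝ} (hq : ∀ v, 0 ≤ q v)
    (hsum : ∀ v : Fin k → A, ∑ b, q (Fin.snoc v b) ≤ 1) (n : ℕ) :
    ∑ u : Fin (k + n) → A, ∏ j, q (block u j) ≤ (Fintype.card A : ℝ) ^ k := by
  induction n with
  | zero => simp
  | succ n ih =>
    refine le_trans ?_ ih
    calc ∑ u : Fin (k + n + 1) → A, ∏ j : Fin (n + 1), q (block (k := k) (n := n + 1) u j)
        = ∑ p : A × (Fin (k + n) → A), ∏ j : Fin (n + 1),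
            q (block (n := n + 1) (Fin.snoc (n := k + n) p.2 p.1) j) :=
          ((Fin.snocEquiv fun _ : Fin (k + n + 1) => A).sum_comp _).symm
      _ = ∑ u : Fin (k + n) → A, (∏ j, q (block u j)) *
            ∑ b, q (Fin.snoc (fun i => u ⟨n + i, by omega⟩) b) := by
          simp only [Fintype.sum_prod_type_right, Fin.prod_univ_castSucc, block_snoc_castSucc,
            block_snoc_last, Finset.mul_sum]
      _ ≤ ∑ u : Fin (k + n) → A, ∏ j, q (block u j) :=
          Finset.sum_le_sum fun u _ =>
            mul_le_of_le_one_right (Finset.prod_nonneg fun j _ => hq _) (hsum _)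

/-- The probability of the last letter of a word given the others, when words have frequencies
proportional to `c` (and `0` when the others never occur). -/
noncomputable def condFreq (c : (Fin (k + 1) → A) → ℝ) (v : Fin (k + 1) → A) : ℝ :=
  c v / ∑ b, c (Fin.snoc (Fin.init v) b)

lemma condFreq_nonneg {c : (Fin (k + 1) → A) → ℝ} (hc : ∀ v, 0 ≤ c v) (v : Fin (k + 1) → A) :
    0 ≤ condFreq c v :=
  div_nonneg (hc v) (Finset.sum_nonneg fun _ _ => hc _)

lemma sum_condFreq_snoc_le_one (c : (Fin (k + 1) → A) → ℝ) (v : Fin k → A) :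
    ∑ b, condFreq c (Fin.snoc v b) ≤ 1 := by
  simp only [condFreq, Fin.init_snoc, ← Finset.sum_div]
  exact div_self_le_one _

/-- The number of occurrences of the subword `v` in `u`. -/
noncomputable def blockCount (u : Fin (k + n) → A) (v : Fin (k + 1) → A) : ℕ :=
  Nat.card {j // block u j = v}

/-- The probability of the last `n` letters of `u` under the Markov chain of order `k` whose
transition probabilities are the empirical ones of `u` itself. -/
noncomputable def likelihood (u : Fin (k + n) → A) : ℝ :=
  ∏ j, condFreq (fun v => blockCount u v) (block u j)

open Classical in
/-- The words of length `k + n` whose empirical conditional entropy given the past of length `k`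
is at most `t`. -/
noncomputable def lowWords (A : Type*) [Fintype A] (k n : ℕ) (t : ℝ) :
    Finset (Fin (k + n) → A) :=
  {u | Real.exp (-(n * t)) ≤ likelihood u}

open Classical in
lemma card_filter_exp_le_prod_condFreq_le {c : (Fin (k + 1) → A) → ℝ} (hc : ∀ v, 0 ≤ c v)
    (n : ℕ) (t : ℝ) :
    (Finset.card {u : Fin (k + n) → A | Real.exp (-(n * t)) ≤ ∏ j, condFreq c (block u j)} : ℝ)
      ≤ (Fintype.card A : ℝ) ^ k * Real.exp (n * t) := by
  rw [← div_le_iff₀ (Real.exp_pos _), div_eq_mul_inv, ← Real.exp_neg, ← nsmul_eq_mul]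
  calc _ ≤ ∑ u : Fin (k + n) → A with Real.exp (-(n * t)) ≤ ∏ j, condFreq c (block u j),
          ∏ j, condFreq c (block u j) :=
        Finset.card_nsmul_le_sum _ _ _ fun u hu => (Finset.mem_filter.1 hu).2
    _ ≤ ∑ u : Fin (k + n) → A, ∏ j, condFreq c (block u j) :=
        Finset.sum_le_sum_of_subset_of_nonneg (Finset.filter_subset _ _) fun u _ _ =>
          Finset.prod_nonneg fun j _ => condFreq_nonneg hc _
    _ ≤ _ := sum_prod_block_le (condFreq_nonneg hc) (sum_condFreq_snoc_le_one c) n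

lemma card_lowWords_le (k n : ℕ) (t : ℝ) :
    ((lowWords A k n t).card : ℝ) ≤ (n + 1 : ℝ) ^ (Fintype.card A ^ (k + 1)) *
      ((Fintype.card A : ℝ) ^ k * Real.exp (n * t)) := by
  classical
  set W : ((Fin (k + 1) → A) → Fin (n + 1)) → Finset (Fin (k + n) → A) := fun c =>
    {u | Real.exp (-(n * t)) ≤ ∏ j, condFreq (fun v => (c v : ℕ)) (block u j)}
  have hlt (u : Fin (k + n) → A) (v) : blockCount u v < n + 1 := by
    refine Nat.lt_succ_of_le ?_
    simpa [blockCount] using Nat.card_le_card_of_injective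
      (Subtype.val : {j // block u j = v} → Fin n) Subtype.val_injective
  have hcover : lowWords A k n t ⊆ Finset.univ.biUnion W := fun u hu =>
    Finset.mem_biUnion.2 ⟨fun v => ⟨blockCount u v, hlt u v⟩, Finset.mem_univ _,
      Finset.mem_filter.2 ⟨Finset.mem_univ _, (Finset.mem_filter.1 hu).2⟩⟩
  calc ((lowWords A k n t).card : ℝ) ≤ ∑ c, ((W c).card : ℝ) :=
        mod_cast (Finset.card_le_card hcover).trans Finset.card_biUnion_le
    _ ≤ ∑ _c : (Fin (k + 1) → A) → Fin (n + 1),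
          (Fintype.card A : ℝ) ^ k * Real.exp (n * t) :=
        Finset.sum_le_sum fun c _ =>
          card_filter_exp_le_prod_condFreq_le (fun v => Nat.cast_nonneg _) n t
    _ = _ := by simp

end Counting

section EmpiricalEntropy

variable {Ω A : Type*} [MeasurableSpace Ω] [Fintype A] [MeasurableSpace A]
  [DiscreteMeasurableSpace A] {T : Ω → Ω} {ξ : Ω → A}

lemma sum_measureReal_itinerary_snoc {μ : Measure Ω} [IsFiniteMeasure μ] (hT : Measurable T)
    (hξ : Measurable ξ) {k : ℕ} (v : Fin k → A) :
    ∑ b, μ.real (itinerary T ξ (k + 1) ⁻¹' {Fin.snoc v b}) = μ.real (itinerary T ξ k ⁻¹' {v}) := by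
  classical
  have hinj : Function.Injective fun b : A => Fin.snoc (α := fun _ => A) v b :=
    Fin.snoc_right_injective (α := fun _ => A) v
  rw [← Finset.sum_image (f := fun u => μ.real (itinerary T ξ (k + 1) ⁻¹' {u}))
      fun _ _ _ _ h => hinj h,
    sum_measureReal_preimage_singleton _ fun u _ =>
      measurable_itinerary hT hξ _ (measurableSet_singleton u)]
  congr 1
  ext x
  have hsnoc : itinerary T ξ (k + 1) x = Fin.snoc (itinerary T ξ k x) (ξ (T^[k] x)) :=
    (Fin.snoc_init_self (itinerary T ξ (k + 1) x)).symm
  simp only [Finset.coe_image, Finset.coe_univ, image_univ, mem_preimage, mem_range,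
    mem_singleton_iff, hsnoc]
  constructor
  · rintro ⟨b, hb⟩
    simpa using! congrArg (Fin.init (α := fun _ => A)) hb.symm
  · rintro rfl
    exact ⟨_, rfl⟩

omit [Fintype A] in
lemma empiricalMeasure_real_itinerary (hT : Measurable T) (hξ : Measurable ξ) (k n : ℕ) (x : Ω)
    (v : Fin (k + 1) → A) :
    (empiricalMeasure T x n : Measure Ω).real (itinerary T ξ (k + 1) ⁻¹' {v}) =
      ((n + 1 : ℕ) : ℝ)⁻¹ * blockCount (itinerary T ξ (k + (n + 1)) x) v := by
  classical
  rw [empiricalMeasure_real T x n (measurable_itinerary hT hξ _ (measurableSet_singleton v)),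
    birkhoffAverage, smul_eq_mul, birkhoffSum, Finset.sum_range, blockCount,
    Nat.card_eq_fintype_card, Fintype.card_subtype, Finset.card_filter]
  push_cast
  simp only [block_itinerary, indicator, mem_preimage, mem_singleton_iff, Pi.one_apply]

/-- The ratio inside `condFreq` is a conditional probability, so that `-log` of it is a difference
of two information functions. -/
lemma condFreq_blockCount_itinerary (hT : Measurable T) (hξ : Measurable ξ) (k n : ℕ) (x : Ω)
    (j : Fin (n + 1)) :
    condFreq (fun v => blockCount (itinerary T ξ (k + (n + 1)) x) v)
        (itinerary T ξ (k + 1) (T^[j] x)) =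
      Real.exp (-(info (empiricalMeasure T x n) (itinerary T ξ (k + 1)) (T^[j] x) -
        info (empiricalMeasure T x n) (itinerary T ξ k) (T^[j] x))) := by
  have hmem : Nonempty {i // block (itinerary T ξ (k + (n + 1)) x) i =
      itinerary T ξ (k + 1) (T^[j] x)} := ⟨j, block_itinerary T ξ x j⟩
  have hinit : Fin.init (itinerary T ξ (k + 1) (T^[j] x)) = itinerary T ξ k (T^[j] x) := rfl
  set v := itinerary T ξ (k + 1) (T^[j] x)
  have hpos : 0 < (empiricalMeasure T x n : Measure Ω).real (itinerary T ξ (k + 1) ⁻¹' {v}) := by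
    have hcount : 0 < blockCount (itinerary T ξ (k + (n + 1)) x) v := Nat.card_pos
    rw [empiricalMeasure_real_itinerary hT hξ]
    positivity
  have hpos' : 0 < (empiricalMeasure T x n : Measure Ω).real
      (itinerary T ξ k ⁻¹' {Fin.init v}) :=
    hpos.trans_le <| measureReal_mono fun y hy =>
      congrArg (Fin.init (α := fun _ => A)) (mem_singleton_iff.1 hy)
  calc condFreq (fun v => blockCount (itinerary T ξ (k + (n + 1)) x) v) v
      = (empiricalMeasure T x n : Measure Ω).real (itinerary T ξ (k + 1) ⁻¹' {v}) /
        (empiricalMeasure T x n : Measure Ω).real (itinerary T ξ k ⁻¹' {Fin.init v}) := by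
        rw [← sum_measureReal_itinerary_snoc hT hξ (Fin.init v)]
        simp only [empiricalMeasure_real_itinerary hT hξ, condFreq, ← Finset.mul_sum]
        rw [mul_div_mul_left _ _ (by positivity)]
    _ = _ := by
        rw [info, info, ← hinit, neg_sub, neg_sub_neg, ← Real.log_div hpos.ne' hpos'.ne',
          Real.exp_log (div_pos hpos hpos')]

lemma likelihood_itinerary (hT : Measurable T) (hξ : Measurable ξ) (k n : ℕ) (x : Ω) :
    likelihood (itinerary T ξ (k + (n + 1)) x) = Real.exp (-((n + 1 : ℕ) *
      ((blockEntropy T (empiricalMeasure T x n) ξ (k + 1)).toReal -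
        (blockEntropy T (empiricalMeasure T x n) ξ k).toReal))) := by
  set μ : Measure Ω := (empiricalMeasure T x n : Measure Ω) with hμ
  have hI (m : ℕ) := measurable_itinerary hT hξ m
  set D : Ω → ℝ := fun y => info μ (itinerary T ξ (k + 1)) y - info μ (itinerary T ξ k) y
  have hmean : ∫ y, D y ∂μ = (blockEntropy T μ ξ (k + 1)).toReal -
      (blockEntropy T μ ξ k).toReal := by
    rw [blockEntropy, blockEntropy, toReal_shannon (hI _), toReal_shannon (hI _)]
    exact integral_sub (integrable_info (hI _)) (integrable_info (hI _))
  have hbirk : (n + 1 : ℕ) * ∫ y, D y ∂μ = birkhoffSum T D (n + 1) x := by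
    have hD : Measurable D := (measurable_info (hI _)).sub (measurable_info (hI _))
    rw [hμ, integral_empiricalMeasure T x n hD, birkhoffAverage, smul_eq_mul,
      mul_inv_cancel_left₀ (by positivity)]
  calc likelihood (itinerary T ξ (k + (n + 1)) x)
      = ∏ j : Fin (n + 1), Real.exp (-D (T^[j] x)) := by
        simp only [likelihood, block_itinerary, condFreq_blockCount_itinerary hT hξ, D, hμ]
    _ = Real.exp (-birkhoffSum T D (n + 1) x) := by
        rw [← Real.exp_sum, Finset.sum_neg_distrib, birkhoffSum, Finset.sum_range]
    _ = _ := by rw [← hbirk, hmean]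

end EmpiricalEntropy

/-! ### Bowen entropy of subsets -/

section Bowen

variable {X : Type*} [PseudoMetricSpace X] {T : X → X} {Z : Set X} {s ε : ℝ} {N : ℕ}

lemma bowenH_le_tsum {ι : Type*} [Countable ι] {c : ι → X} {m : ι → ℕ} (hm : ∀ i, N ≤ m i)
    (hZ : Z ⊆ ⋃ i, bowenBall T (c i) (m i) ε) :
    bowenH T Z s ε N ≤ ∑' i, ENNReal.ofReal (Real.exp (-s * m i)) := by
  refine iInf_le_of_le (range fun i => (c i, m i)) <| iInf_le_of_le (countable_range _) <|
    iInf_le_of_le (forall_mem_range.2 hm) <|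
      iInf_le_of_le (by simpa only [biUnion_range] using hZ) ?_
  exact ENNReal.tsum_le_tsum_comp_of_surjective rangeFactorization_surjective
    fun p : range fun i => (c i, m i) => ENNReal.ofReal (Real.exp (-s * (p : X × ℕ).2))

lemma bowenH_mono {Z' : Set X} (h : Z ⊆ Z') : bowenH T Z s ε N ≤ bowenH T Z' s ε N :=
  iInf_mono fun _ => iInf_mono fun _ => iInf_mono fun _ => iInf_mono' fun hZ' =>
    ⟨h.trans hZ', le_rfl⟩

lemma bowenH_iUnion_le (Z : ℕ → Set X) :
    bowenH T (⋃ k, Z k) s ε N ≤ ∑' k, bowenH T (Z k) s ε N := by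
  refine ENNReal.le_of_forall_pos_le_add fun δ hδ hfin => ?_
  obtain ⟨η, hη, hsum⟩ := ENNReal.exists_pos_sum_of_countable' (ENNReal.coe_pos.2 hδ).ne' ℕ
  have hcover (k : ℕ) : ∃ C : Set (X × ℕ), C.Countable ∧ (∀ p ∈ C, N ≤ p.2) ∧
      (Z k ⊆ ⋃ p ∈ C, bowenBall T p.1 p.2 ε) ∧
      ∑' p : C, ENNReal.ofReal (Real.exp (-s * (p : X × ℕ).2)) <
        bowenH T (Z k) s ε N + η k := by
    simpa only [bowenH, iInf_lt_iff, exists_prop] using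
      ENNReal.lt_add_right (ENNReal.ne_top_of_tsum_ne_top hfin.ne k) (hη k).ne'
  choose C hC hN hZ hlt using hcover
  have := fun k => (hC k).to_subtype
  calc bowenH T (⋃ k, Z k) s ε N
      ≤ ∑' i : Σ k, C k, ENNReal.ofReal (Real.exp (-s * (i.2 : X × ℕ).2)) := by
        refine bowenH_le_tsum (c := fun i : Σ k, C k => (i.2 : X × ℕ).1)
          (fun i => hN _ _ i.2.2) (iUnion_subset fun k x hx => ?_)
        obtain ⟨p, hp, hxp⟩ := mem_iUnion₂.1 (hZ k hx)
        exact mem_iUnion.2 ⟨⟨k, p, hp⟩, hxp⟩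
    _ ≤ ∑' k, (bowenH T (Z k) s ε N + η k) := by
        rw [ENNReal.tsum_sigma']
        exact ENNReal.tsum_le_tsum fun k => (hlt k).le
    _ ≤ ∑' k, bowenH T (Z k) s ε N + δ := by
        rw [ENNReal.tsum_add]
        exact add_le_add_right hsum.le _

lemma bowenH_eq_zero_of_frequently {E : ℕ → Finset X}
    (hsum : ∑' n, ((E n).card : ℝ≥0∞) * ENNReal.ofReal (Real.exp (-s * n)) ≠ ∞)
    (hZ : ∀ x ∈ Z, ∃ᶠ n in atTop, ∃ c ∈ E n, x ∈ bowenBall T c n ε) (N : ℕ) :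
    bowenH T Z s ε N = 0 := by
  have htail := ENNReal.tendsto_sum_nat_add _ hsum
  refine le_antisymm (ge_of_tendsto htail ?_) zero_le
  filter_upwards [eventually_ge_atTop N] with M hM
  calc bowenH T Z s ε N
      ≤ ∑' i : Σ n, E (n + M), ENNReal.ofReal (Real.exp (-s * (i.1 + M : ℕ))) := by
        refine bowenH_le_tsum (c := fun i : Σ n, E (n + M) => (i.2 : X))
          (fun i => le_add_left hM) fun x hx => ?_
        obtain ⟨n, hn, c, hc, hxc⟩ := frequently_atTop.1 (hZ x hx) M
        obtain ⟨n, rfl⟩ := Nat.exists_eq_add_of_le' hn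
        exact mem_iUnion.2 ⟨⟨n, c, hc⟩, hxc⟩
    _ = ∑' n, ((E (n + M)).card : ℝ≥0∞) * ENNReal.ofReal (Real.exp (-s * (n + M : ℕ))) := by
        rw [ENNReal.tsum_sigma']
        simp [tsum_fintype]

lemma bowenEntropy_mono {Z' : Set X} (h : Z ⊆ Z') : bowenEntropy T Z ≤ bowenEntropy T Z' :=
  iSup₂_mono fun _ _ => sInf_le_sInf <| image_mono fun _ hs =>
    le_bot_iff.1 ((iSup_mono fun _ => bowenH_mono h).trans_eq hs)

lemma bowenEntropy_le {t : ℝ≥0∞}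
    (h : ∀ ε > 0, ∀ s : ℝ≥0, t < s → ∀ N, bowenH T Z s ε N = 0) : bowenEntropy T Z ≤ t := by
  refine iSup₂_le fun ε hε => le_of_forall_gt fun r hr => ?_
  obtain ⟨s, hts, hsr⟩ := ENNReal.lt_iff_exists_nnreal_btwn.1 hr
  have hs : bowenEntropyRes T Z ε ≤ s := sInf_le ⟨s, ENNReal.iSup_eq_zero.2 (h ε hε s hts), rfl⟩
  exact hs.trans_lt hsr

/-- The mass distribution principle. -/
lemma le_bowenEntropy_of_measure_ne_zero [MeasurableSpace X] (ν : Measure X) {s : ℝ≥0}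
    (hε : 0 < ε)
    (hν : ν {x ∈ Z | ∀ᶠ n : ℕ in atTop, ∀ c, x ∈ bowenBall T c n ε →
      ν (bowenBall T c n ε) ≤ ENNReal.ofReal (Real.exp (-s * n))} ≠ 0) :
    s ≤ bowenEntropy T Z := by
  refine le_trans (le_sInf ?_) (le_iSup₂ (f := fun ε (_ : 0 < ε) => bowenEntropyRes T Z ε) ε hε)
  rintro _ ⟨r, hr, rfl⟩
  by_contra! hrs
  set G : ℕ → Set X := fun N => {x ∈ Z | ∀ n ≥ N, ∀ c, x ∈ bowenBall T c n ε →
    ν (bowenBall T c n ε) ≤ ENNReal.ofReal (Real.exp (-s * n))}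
  refine hν (measure_mono_null (t := ⋃ N, G N) (fun x hx => ?_) (measure_iUnion_null fun N => ?_))
  · obtain ⟨N, hN⟩ := eventually_atTop.1 hx.2
    exact mem_iUnion.2 ⟨N, hx.1, hN⟩
  rw [← nonpos_iff_eq_zero, ← ENNReal.iSup_eq_zero.1 hr N]
  refine le_iInf fun C => le_iInf fun hC => le_iInf fun hCN => le_iInf fun hCZ => ?_
  calc ν (G N) ≤ ν (⋃ p ∈ C, G N ∩ bowenBall T p.1 p.2 ε) := by
        rw [← inter_iUnion₂]
        exact measure_mono fun x hx => ⟨hx, hCZ hx.1⟩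
    _ ≤ ∑' p : C, ν (G N ∩ bowenBall T (p : X × ℕ).1 (p : X × ℕ).2 ε) :=
        measure_biUnion_le ν hC _
    _ ≤ ∑' p : C, ENNReal.ofReal (Real.exp (-r * (p : X × ℕ).2)) :=
        ENNReal.tsum_le_tsum fun ⟨⟨c, n⟩, hp⟩ => ?_
  rcases (G N ∩ bowenBall T c n ε).eq_empty_or_nonempty with hempty | ⟨x, hx, hxc⟩
  · simp [hempty]
  · refine (measure_mono inter_subset_right).trans ((hx.2 n (hCN _ hp) c hxc).trans ?_)
    gcongr
    exact mod_cast hrs.le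

end Bowen

/-! ### The full shift -/

section Shift

variable {x y : ℕ → Bool} {n k : ℕ} {ε : ℝ}

/-- The symbol at time `0`. Its itineraries under the shift are the initial words. -/
def firstSymbol (x : ℕ → Bool) : Bool := x 0

lemma continuous_firstSymbol : Continuous firstSymbol := continuous_apply 0

lemma continuous_shift : Continuous shift := continuous_pi fun _ => continuous_apply _

lemma shift_iterate_apply (j : ℕ) (x : ℕ → Bool) (i : ℕ) : shift^[j] x i = x (i + j) := by
  induction j generalizing x with
  | zero => rfl
  | succ j ih => rw [Function.iterate_succ_apply, ih, shift, add_assoc]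

lemma itinerary_shift (n : ℕ) (x : ℕ → Bool) :
    itinerary shift firstSymbol n x = fun i : Fin n => x i := by
  funext i
  simp [itinerary, firstSymbol, shift_iterate_apply]

lemma isGenerator_firstSymbol : IsGenerator shift firstSymbol := by
  have hcoord (j : ℕ) : (fun x : ℕ → Bool => x j) = firstSymbol ∘ shift^[j] := by
    funext x
    simp [firstSymbol, shift_iterate_apply]
  exact iSup_mono fun j => le_of_eq (congrArg (MeasurableSpace.comap · _) (hcoord j))

lemma cyl_eq_preimage_itinerary (w : List Bool) :
    cyl w = itinerary shift firstSymbol w.length ⁻¹' {w.get} := by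
  ext x
  simp only [cyl, Set.mem_ofPred_eq, mem_preimage, itinerary_shift, mem_singleton_iff, funext_iff]

lemma isClopen_cyl (w : List Bool) : IsClopen (cyl w) := by
  rw [cyl_eq_preimage_itinerary]
  exact (isClopen_discrete _).preimage
    (continuous_itinerary continuous_shift continuous_firstSymbol _)

lemma hasFreq_iff_tendsto_empiricalMeasure {w : List Bool} {r : ℝ} :
    hasFreq w x r ↔
      Tendsto (fun n => (empiricalMeasure shift x n : Measure (ℕ → Bool)).real (cyl w)) atTop
        (𝓝 r) := by
  simp only [empiricalMeasure_real shift x _ (isClopen_cyl w).isOpen.measurableSet, birkhoffAverage,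
    birkhoffSum, smul_eq_mul, inv_mul_eq_div]
  exact (tendsto_add_atTop_iff_nat (f := fun n : ℕ =>
    (∑ j ∈ Finset.range n, (cyl w).indicator 1 (shift^[j] x)) / (n : ℝ)) 1).symm

lemma mem_bowenBall_shift (hk : (1 / 2 : ℝ) ^ k < ε)
    (h : ∀ i < n + k, x i = y i) : y ∈ bowenBall shift x n ε := by
  refine fun j hj => lt_of_le_of_lt (PiNat.mem_cylinder_iff_dist_le.1 fun i hi => ?_) hk
  rw [shift_iterate_apply, shift_iterate_apply]
  exact h (i + j) (by omega)

lemma itinerary_eq_of_mem_bowenBall_shift (h : y ∈ bowenBall shift x n 1) :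
    itinerary shift firstSymbol n x = itinerary shift firstSymbol n y := by
  funext j
  have hdist : dist (shift^[j] x) (shift^[j] y) < (1 / 2 : ℝ) ^ 0 := by simpa using h j j.2
  exact PiNat.apply_eq_of_dist_lt hdist le_rfl

end Shift

/-! ### The upper bound -/

section UpperBound

lemma exists_blockEntropy_sub_lt {Ω A : Type*} [MeasurableSpace Ω] [Finite A] {T : Ω → Ω}
    {μ : Measure Ω} [IsProbabilityMeasure μ] {ξ : Ω → A} {t : ℝ≥0} (h : entropyRate T μ ξ < t) :
    ∃ k, (blockEntropy T μ ξ (k + 1)).toReal - (blockEntropy T μ ξ k).toReal < t := by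
  obtain ⟨n, hn⟩ := iInf_lt_iff.1 h
  by_contra! hle
  have hsum : (n + 1) * t ≤ (blockEntropy T μ ξ (n + 1)).toReal := by
    simpa [Finset.sum_range_sub (fun k => (blockEntropy T μ ξ k).toReal), blockEntropy_zero]
      using Finset.sum_le_sum fun k (_ : k ∈ Finset.range (n + 1)) => hle k
  rw [ENNReal.div_lt_iff (by simp) (by simp)] at hn
  have hlt := ENNReal.toReal_strict_mono (by finiteness) hn
  rw [ENNReal.toReal_mul, ENNReal.coe_toReal, ENNReal.toReal_natCast] at hlt
  push_cast at hlt
  linarith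

lemma exists_frequently_mem_lowWords {Ω A : Type*} [TopologicalSpace Ω] [MeasurableSpace Ω]
    [BorelSpace Ω] [HasOuterApproxClosed Ω] [TopologicalSpace A] [DiscreteTopology A] [Fintype A]
    {T : Ω → Ω} {ξ : Ω → A} (hT : Continuous T) (hξ : Continuous ξ) {x : Ω}
    {μ : ProbabilityMeasure Ω} (hμ : MapClusterPt μ atTop (empiricalMeasure T x)) {t : ℝ≥0}
    (h : entropyRate T μ ξ < t) :
    ∃ k, ∃ᶠ n in atTop, itinerary T ξ (k + n) x ∈ lowWords A k n t := by
  borelize A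
  obtain ⟨k, hk⟩ := exists_blockEntropy_sub_lt h
  have hcont (m : ℕ) : ContinuousAt
      (fun ν : ProbabilityMeasure Ω => (blockEntropy T ν ξ m).toReal) μ :=
    (ENNReal.tendsto_toReal (blockEntropy_ne_top T μ ξ m)).comp
      (continuous_blockEntropy hT hξ m).continuousAt
  have hfreq := hμ.frequently (((hcont (k + 1)).sub (hcont k)).eventually_lt continuousAt_const hk)
  refine ⟨k, (tendsto_add_atTop_nat 1).frequently (hfreq.mono fun n hn => ?_)⟩
  rw [lowWords, Finset.mem_filter_univ, likelihood_itinerary hT.measurable hξ.measurable]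
  gcongr
  exact hn.le

lemma tsum_card_lowWords_ne_top (A : Type*) [Fintype A] (k K : ℕ) {s t : ℝ} (hts : t < s) :
    ∑' n, ((lowWords A k (n + K) t).card : ℝ≥0∞) * ENNReal.ofReal (Real.exp (-s * n)) ≠ ∞ := by
  set d := Fintype.card A
  have hsum := ((summable_nat_add_iff (K + 1)).2
    (Real.summable_pow_mul_exp_neg_nat_mul (d ^ (k + 1)) (sub_pos.2 hts))).mul_left
      (d ^ k * Real.exp (s * K + (s - t)))
  refine ne_top_of_le_ne_top hsum.tsum_ofReal_ne_top (ENNReal.tsum_le_tsum fun n => ?_)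
  rw [← ENNReal.ofReal_natCast, ← ENNReal.ofReal_mul (Nat.cast_nonneg _)]
  refine ENNReal.ofReal_le_ofReal ?_
  calc ((lowWords A k (n + K) t).card : ℝ) * Real.exp (-s * n)
      ≤ ((n + K : ℕ) + 1 : ℝ) ^ d ^ (k + 1) * (d ^ k * Real.exp ((n + K : ℕ) * t)) *
          Real.exp (-s * n) := by
        gcongr
        exact card_lowWords_le k (n + K) t
    _ = ((n + K : ℕ) + 1 : ℝ) ^ d ^ (k + 1) * d ^ k *
          Real.exp ((n + K : ℕ) * t + -s * n) := by
        rw [Real.exp_add]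
        ring
    _ = d ^ k * Real.exp (s * K + (s - t)) * (((n + (K + 1) : ℕ) : ℝ) ^ d ^ (k + 1) *
          Real.exp (-(s - t) * (n + (K + 1) : ℕ))) := by
        rw [show ((n + K : ℕ) * t + -s * n : ℝ) =
          (s * K + (s - t)) + -(s - t) * (n + (K + 1) : ℕ) by push_cast; ring, Real.exp_add]
        push_cast
        ring

/-- The extension of a finite word by `false`, serving as the center of a Bowen ball. -/
noncomputable def extendWord {n : ℕ} (u : Fin n → Bool) : ℕ → Bool :=
  Function.extend Fin.val u fun _ => false

lemma extendWord_itinerary {n i : ℕ} (x : ℕ → Bool) (hi : i < n) :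
    extendWord (itinerary shift firstSymbol n x) i = x i := by
  rw [itinerary_shift]
  exact Fin.val_injective.extend_apply _ _ (⟨i, hi⟩ : Fin n)

lemma bowenH_shift_eq_zero {Z : Set (ℕ → Bool)} {s t ε : ℝ} (hts : t < s) (hε : 0 < ε)
    (hZ : ∀ x ∈ Z, ∃ k, ∃ᶠ n in atTop,
      itinerary shift firstSymbol (k + n) x ∈ lowWords Bool k n t) (N : ℕ) :
    bowenH shift Z s ε N = 0 := by
  classical
  obtain ⟨K, hK⟩ := exists_pow_lt_of_lt_one hε (by norm_num : (1 / 2 : ℝ) < 1)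
  set Y : ℕ → Set (ℕ → Bool) := fun k =>
    {x | ∃ᶠ n in atTop, itinerary shift firstSymbol (k + n) x ∈ lowWords Bool k n t}
  have hY (k : ℕ) : bowenH shift (Y k) s ε N = 0 := by
    refine bowenH_eq_zero_of_frequently
      (E := fun n => (lowWords Bool k (n + K) t).image extendWord) ?_ (fun x hx => ?_) N
    · refine ne_top_of_le_ne_top (tsum_card_lowWords_ne_top Bool k K hts)
        (ENNReal.tsum_le_tsum fun n => ?_)
      gcongr
      exact Finset.card_image_le
    · change ∃ᶠ n in atTop, itinerary shift firstSymbol (k + n) x ∈ lowWords Bool k n t at hx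
      have hxK : ∃ᶠ n in atTop, itinerary shift firstSymbol (k + (n + K)) x ∈
          lowWords Bool k (n + K) t := by
        rw [← map_add_atTop_eq_nat K] at hx
        exact frequently_map.1 hx
      refine hxK.mono fun n hn => ⟨_, Finset.mem_image_of_mem _ hn, mem_bowenBall_shift hK ?_⟩
      exact fun i hi => extendWord_itinerary x (by omega)
  refine nonpos_iff_eq_zero.1 ((bowenH_mono fun x hx => mem_iUnion.2 (hZ x hx)).trans ?_)
  exact (bowenH_iUnion_le Y).trans_eq (by simp [hY])

theorem bowenEntropy_shift_le {Z : Set (ℕ → Bool)} {t : ℝ≥0∞}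
    (h : ∀ x ∈ Z, ∃ μ : ProbabilityMeasure (ℕ → Bool),
      MapClusterPt μ atTop (empiricalMeasure shift x) ∧ ksEntropy shift μ ≤ t) :
    bowenEntropy shift Z ≤ t := by
  refine bowenEntropy_le fun ε hε s hts N => ?_
  obtain ⟨r, htr, hrs⟩ := ENNReal.lt_iff_exists_nnreal_btwn.1 hts
  refine bowenH_shift_eq_zero (t := r) (mod_cast hrs) hε (fun x hx => ?_) N
  obtain ⟨μ, hcl, hμ⟩ := h x hx
  have hinv := measurePreserving_of_mapClusterPt continuous_shift hcl
  refine exists_frequently_mem_lowWords continuous_shift continuous_firstSymbol hcl ?_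
  exact (entropyRate_le_ksEntropy hinv continuous_firstSymbol.measurable).trans_lt
    (hμ.trans_lt htr)

end UpperBound

/-! ### A strong law for sub-Gaussian arrays -/

section StrongLaw

open ProbabilityTheory

variable {Ω : Type*} [MeasurableSpace Ω] {P : Measure Ω} [IsFiniteMeasure P] {S : ℕ → Ω → ℝ}
  {v : ℕ → ℝ≥0}

lemma ae_eventually_lt_of_hasSubgaussianMGF (hS : ∀ i, HasSubgaussianMGF (S i) (v i) P) {ε : ℝ}
    (hε : 0 ≤ ε) (hv : Summable fun i => Real.exp (-ε ^ 2 / (2 * v i))) :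
    ∀ᵐ ω ∂P, ∀ᶠ i in atTop, S i ω < ε := by
  have hsum : ∑' i, P {ω | ε ≤ S i ω} ≠ ∞ := by
    refine ne_top_of_le_ne_top hv.tsum_ofReal_ne_top (ENNReal.tsum_le_tsum fun i => ?_)
    rw [← ofReal_measureReal]
    exact ENNReal.ofReal_le_ofReal ((hS i).measure_ge_le hε)
  filter_upwards [ae_eventually_notMem hsum] with ω hω
  exact hω.mono fun i => not_le.1

lemma ae_tendsto_zero_of_hasSubgaussianMGF (hS : ∀ i, HasSubgaussianMGF (S i) (v i) P)
    (hv : ∀ ε > 0, Summable fun i => Real.exp (-ε ^ 2 / (2 * v i))) :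
    ∀ᵐ ω ∂P, Tendsto (fun i => S i ω) atTop (𝓝 0) := by
  obtain ⟨ε, -, hε, hlim⟩ := exists_seq_strictAnti_tendsto (0 : ℝ)
  have habs (m : ℕ) : ∀ᵐ ω ∂P, ∀ᶠ i in atTop, |S i ω| < ε m := by
    filter_upwards [ae_eventually_lt_of_hasSubgaussianMGF hS (hε m).le (hv _ (hε m)),
      ae_eventually_lt_of_hasSubgaussianMGF (fun i => (hS i).neg) (hε m).le (hv _ (hε m))]
      with ω hpos hneg
    filter_upwards [hpos, hneg] with i hi hi' using abs_lt.2 ⟨neg_lt.1 hi', hi⟩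
  filter_upwards [ae_all_iff.2 habs] with ω hω
  refine Metric.tendsto_nhds.2 fun δ hδ => ?_
  obtain ⟨m, hm⟩ := (hlim.eventually_lt_const hδ).exists
  filter_upwards [hω m] with i hi
  simpa using hi.trans hm

lemma hasSubgaussianMGF_eval_sub_integral {ι Y : Type*} [MeasurableSpace Y] (μ : Measure Y)
    [IsProbabilityMeasure μ] {g : Y → ℝ} (hg : Measurable g) {C : ℝ≥0} (hC : ∀ y, |g y| ≤ C)
    (j : ι) :
    HasSubgaussianMGF (fun ω : ι → Y => g (ω j) - ∫ y, g y ∂μ) (C ^ 2)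
      (Measure.infinitePi fun _ : ι => μ) := by
  have hmp := measurePreserving_eval_infinitePi (fun _ : ι => μ) j
  have h := hasSubgaussianMGF_of_mem_Icc hg.aemeasurable (ae_of_all μ fun y => abs_le.1 (hC y))
  rw [← hmp.map_eq] at h
  convert h.of_map hmp.measurable.aemeasurable using 1
  · simp [hmp.map_eq, Function.comp_def]
  · ext
    simp [← two_mul]

lemma inv_sq_sq_mul_sum_sq_le (D : ℝ≥0) (i : ℕ) :
    ((i : ℝ≥0) ^ 2)⁻¹ ^ 2 * ∑ j ∈ Finset.range i, (D * (j + 1)) ^ 2 ≤ D ^ 2 / i := by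
  rcases i.eq_zero_or_pos with rfl | hi
  · simp
  calc ((i : ℝ≥0) ^ 2)⁻¹ ^ 2 * ∑ j ∈ Finset.range i, (D * (j + 1)) ^ 2
      ≤ ((i : ℝ≥0) ^ 2)⁻¹ ^ 2 * ∑ j ∈ Finset.range i, (D * i) ^ 2 := by
        gcongr with j hj
        exact mod_cast Finset.mem_range.1 hj
    _ = D ^ 2 / i := by
        rw [Finset.sum_const, Finset.card_range, nsmul_eq_mul]
        field_simp

lemma ae_tendsto_sum_sub_integral_div_sq {Y : Type*} [MeasurableSpace Y] (μ : Measure Y)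
    [IsProbabilityMeasure μ] {f : ℕ → Y → ℝ} (hf : ∀ j, Measurable (f j)) {C : ℝ}
    (hbd : ∀ (j : ℕ) y, |f j y| ≤ C * (j + 1)) :
    ∀ᵐ ω ∂Measure.infinitePi fun _ : ℕ => μ,
      Tendsto (fun i : ℕ => (∑ j ∈ Finset.range i, (f j (ω j) - ∫ y, f j y ∂μ)) / (i : ℝ) ^ 2)
        atTop (𝓝 0) := by
  set P := Measure.infinitePi fun _ : ℕ => μ
  obtain ⟨D, hD, hCD⟩ : ∃ D : ℝ≥0, 0 < D ∧ C ≤ D :=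
    ⟨C.toNNReal + 1, by positivity, by push_cast; linarith [Real.le_coe_toNNReal C]⟩
  have hsub (j : ℕ) : HasSubgaussianMGF (fun ω : ℕ → Y => f j (ω j) - ∫ y, f j y ∂μ)
      ((D * (j + 1)) ^ 2) P := by
    refine hasSubgaussianMGF_eval_sub_integral μ (hf j) (fun y => (hbd j y).trans ?_) j
    push_cast
    gcongr
  have hind : iIndepFun (fun j (ω : ℕ → Y) => f j (ω j) - ∫ y, f j y ∂μ) P :=
    iIndepFun_infinitePi (X := fun j y => f j y - ∫ y, f j y ∂μ) fun j => (hf j).sub_const _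
  have hmean (i : ℕ) : HasSubgaussianMGF (fun ω : ℕ → Y =>
      ((i : ℝ) ^ 2)⁻¹ * ∑ j ∈ Finset.range i, (f j (ω j) - ∫ y, f j y ∂μ)) (D ^ 2 / i) P := by
    have h := (HasSubgaussianMGF.sum_of_iIndepFun hind (s := Finset.range i)
      fun j _ => hsub j).const_mul ((i : ℝ) ^ 2)⁻¹
    refine ⟨h.integrable_exp_mul, fun t => (h.mgf_le t).trans ?_⟩
    gcongr
    exact inv_sq_sq_mul_sum_sq_le D i
  simp_rw [div_eq_inv_mul]
  refine ae_tendsto_zero_of_hasSubgaussianMGF hmean fun ε hε => ?_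
  have hrate (i : ℕ) : -ε ^ 2 / (2 * ((D ^ 2 / i : ℝ≥0) : ℝ)) = i * (-(ε ^ 2 / (2 * D ^ 2))) := by
    push_cast
    rw [← mul_div_assoc, div_div_eq_mul_div]
    ring
  simp_rw [hrate, Real.summable_exp_nat_mul_iff, neg_lt_zero]
  positivity

end StrongLaw

/-! ### Concatenation of independent blocks -/

section Squares

lemma tendsto_natSqrt_atTop : Tendsto Nat.sqrt atTop atTop :=
  tendsto_atTop_atTop_of_monotone (fun _ _ => Nat.sqrt_le_sqrt) fun b =>
    ⟨b ^ 2, (Nat.sqrt_eq' b).ge⟩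

lemma natCast_le_sqrt_sq_add (n : ℕ) : (n : ℝ) ≤ (Nat.sqrt n : ℝ) ^ 2 + 2 * Nat.sqrt n := by
  exact mod_cast (Nat.sqrt_le_add n).trans_eq (by ring)

lemma tendsto_sub_sqrt_sq_div :
    Tendsto (fun n : ℕ => ((n : ℝ) - (Nat.sqrt n : ℝ) ^ 2) / n) atTop (𝓝 0) := by
  have hlim : Tendsto (fun n : ℕ => 2 / √(n : ℝ)) atTop (𝓝 0) :=
    (Real.tendsto_sqrt_atTop.comp tendsto_natCast_atTop_atTop).const_div_atTop 2
  refine squeeze_zero (fun n => ?_) (fun n => ?_) hlim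
  · have := Nat.sqrt_le' n
    exact div_nonneg (sub_nonneg.2 (mod_cast this)) n.cast_nonneg
  · rcases n.eq_zero_or_pos with rfl | hn
    · simp
    have hsqrt : (Nat.sqrt n : ℝ) ≤ √n := Real.nat_sqrt_le_real_sqrt
    rw [div_le_div_iff₀ (by positivity) (by positivity)]
    nlinarith [natCast_le_sqrt_sq_add n, Real.sq_sqrt (n.cast_nonneg : (0 : ℝ) ≤ n),
      Real.sqrt_nonneg n]

lemma tendsto_div_of_tendsto_sq_div {u : ℕ → ℝ} {K c : ℝ}
    (hu : ∀ m n : ℕ, |u (m + n) - u m| ≤ K * n)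
    (h : Tendsto (fun i : ℕ => u (i ^ 2) / (i : ℝ) ^ 2) atTop (𝓝 c)) :
    Tendsto (fun n : ℕ => u n / n) atTop (𝓝 c) := by
  have herr : Tendsto (fun n : ℕ => (u n - u (Nat.sqrt n ^ 2)) / n) atTop (𝓝 0) := by
    refine squeeze_zero_norm (fun n => ?_) (by simpa using tendsto_sub_sqrt_sq_div.const_mul K)
    obtain ⟨m, hm⟩ := Nat.exists_eq_add_of_le (Nat.sqrt_le' n)
    have hmn : (m : ℝ) = n - (Nat.sqrt n : ℝ) ^ 2 := eq_sub_of_add_eq' (mod_cast hm.symm)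
    rw [norm_div, Real.norm_natCast, Real.norm_eq_abs, ← mul_div_assoc, ← hmn]
    gcongr
    have h := hu (Nat.sqrt n ^ 2) m
    rwa [← hm] at h
  have hmain := ((h.comp tendsto_natSqrt_atTop).mul (tendsto_sub_sqrt_sq_div.const_sub 1)).add herr
  rw [sub_zero, mul_one, add_zero] at hmain
  refine hmain.congr' ?_
  filter_upwards [eventually_gt_atTop 0] with n hn
  have : (0 : ℝ) < Nat.sqrt n := mod_cast Nat.sqrt_pos.2 hn
  simp only [Function.comp_apply]
  field_simp
  ring

end Squares

section Birkhoff

variable {Ω : Type*} {T : Ω → Ω} {f : Ω → ℝ}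

lemma birkhoffSum_sq (T : Ω → Ω) (f : Ω → ℝ) (i : ℕ) (x : Ω) :
    birkhoffSum T f (i ^ 2) x =
      ∑ j ∈ Finset.range i, birkhoffSum T f (2 * j + 1) (T^[j ^ 2] x) := by
  induction i with
  | zero => simp
  | succ i ih =>
    rw [Finset.sum_range_succ, ← ih, ← birkhoffSum_add]
    congr 1
    ring

lemma birkhoffSum_indicator_mem_Icc (T : Ω → Ω) (s : Set Ω) (n : ℕ) (x : Ω) :
    birkhoffSum T (s.indicator 1) n x ∈ Icc (0 : ℝ) n := by
  refine ⟨Finset.sum_nonneg fun j _ => indicator_nonneg (fun _ _ => zero_le_one) _, ?_⟩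
  simpa [birkhoffSum] using
    Finset.sum_le_card_nsmul (Finset.range n) (fun j => s.indicator 1 (T^[j] x)) (1 : ℝ)
      fun j _ => indicator_le' (fun _ _ => le_rfl) (fun _ _ => zero_le_one) _

variable [MeasurableSpace Ω]

lemma measurable_birkhoffSum (hT : Measurable T) (hf : Measurable f) (n : ℕ) :
    Measurable (birkhoffSum T f n) :=
  Finset.measurable_fun_sum _ fun j _ => hf.comp (hT.iterate j)

lemma integral_birkhoffSum {μ : Measure Ω} (hT : MeasurePreserving T μ μ) (hf : Integrable f μ)
    (n : ℕ) : ∫ x, birkhoffSum T f n x ∂μ = n * ∫ x, f x ∂μ := by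
  have hint (j : ℕ) : Integrable (fun x => f (T^[j] x)) μ :=
    (hT.iterate j).integrable_comp_of_integrable hf
  have hcomp (j : ℕ) : ∫ x, f (T^[j] x) ∂μ = ∫ x, f x ∂μ := by
    have hmp := hT.iterate j
    have hfm : AEStronglyMeasurable f (μ.map T^[j]) := by
      rw [hmp.map_eq]
      exact hf.aestronglyMeasurable
    rw [← integral_map hmp.measurable.aemeasurable hfm, hmp.map_eq]
  simp only [birkhoffSum]
  rw [integral_finsetSum _ fun j _ => hint j]
  simp [hcomp]

lemma sum_integral_birkhoffSum_two_mul_add_one {μ : Measure Ω} (hT : MeasurePreserving T μ μ)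
    (hf : Integrable f μ) (i : ℕ) :
    ∑ j ∈ Finset.range i, ∫ x, birkhoffSum T f (2 * j + 1) x ∂μ = (i : ℝ) ^ 2 * ∫ x, f x ∂μ := by
  induction i with
  | zero => simp
  | succ i ih =>
    rw [Finset.sum_range_succ, ih, integral_birkhoffSum hT hf]
    push_cast
    ring

end Birkhoff

section Concatenation

/-- The concatenation of the initial words of lengths `1, 3, 5, …` of the sequences
`ω 0, ω 1, ω 2, …`, so that the `j`-th word occupies the positions `j ^ 2, …, j ^ 2 + 2 * j`. -/
def concat {A : Type*} (ω : ℕ → ℕ → A) : ℕ → A := fun t => ω (Nat.sqrt t) (t - Nat.sqrt t ^ 2)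

lemma measurable_concat {A : Type*} [MeasurableSpace A] : Measurable (concat (A := A)) :=
  measurable_pi_iff.2 fun t =>
    (measurable_pi_apply (t - Nat.sqrt t ^ 2)).comp (measurable_pi_apply (Nat.sqrt t))

lemma concat_sq_add {A : Type*} (ω : ℕ → ℕ → A) {j r : ℕ} (hr : r < 2 * j + 1) :
    concat ω (j ^ 2 + r) = ω j r := by
  rw [concat, Nat.sqrt_add_eq' j (by omega), Nat.add_sub_cancel_left]

lemma indicator_cyl_shift_iterate_eq {w : List Bool} {x y : ℕ → Bool} {n k : ℕ}
    (hxy : ∀ i < n, x i = y i) (hk : k + w.length ≤ n) :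
    (cyl w).indicator (1 : (ℕ → Bool) → ℝ) (shift^[k] x) = (cyl w).indicator 1 (shift^[k] y) := by
  have hmem : shift^[k] x ∈ cyl w ↔ shift^[k] y ∈ cyl w :=
    forall_congr' fun i => by
      rw [shift_iterate_apply, shift_iterate_apply, hxy _ (by omega)]
  by_cases hy : shift^[k] y ∈ cyl w <;> simp [hmem, hy]

lemma abs_birkhoffSum_indicator_cyl_sub_le (w : List Bool) {x y : ℕ → Bool} {n : ℕ}
    (hxy : ∀ i < n, x i = y i) :
    |birkhoffSum shift ((cyl w).indicator (1 : (ℕ → Bool) → ℝ)) n x -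
      birkhoffSum shift ((cyl w).indicator 1) n y| ≤ w.length := by
  have hhead : birkhoffSum shift ((cyl w).indicator (1 : (ℕ → Bool) → ℝ)) (n - w.length) x =
      birkhoffSum shift ((cyl w).indicator 1) (n - w.length) y :=
    Finset.sum_congr rfl fun k hk =>
      indicator_cyl_shift_iterate_eq hxy (by have := Finset.mem_range.1 hk; omega)
  obtain ⟨m, hm, hn⟩ : ∃ m ≤ w.length, n - w.length + m = n :=
    ⟨n - (n - w.length), by omega, by omega⟩
  rw [← hn, birkhoffSum_add, birkhoffSum_add, hhead, add_sub_add_left_eq_sub]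
  have hx := birkhoffSum_indicator_mem_Icc shift (cyl w) m (shift^[n - w.length] x)
  have hy := birkhoffSum_indicator_mem_Icc shift (cyl w) m (shift^[n - w.length] y)
  exact (abs_sub_le_of_nonneg_of_le hx.1 hx.2 hy.1 hy.2).trans (mod_cast hm)

lemma abs_birkhoffSum_concat_sub_le (w : List Bool) (ω : ℕ → ℕ → Bool) (i : ℕ) :
    |birkhoffSum shift ((cyl w).indicator (1 : (ℕ → Bool) → ℝ)) (i ^ 2) (concat ω) -
      ∑ j ∈ Finset.range i, birkhoffSum shift ((cyl w).indicator 1) (2 * j + 1) (ω j)| ≤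
        i * w.length := by
  rw [birkhoffSum_sq, ← Finset.sum_sub_distrib]
  refine (Finset.abs_sum_le_sum_abs _ _).trans ((Finset.sum_le_card_nsmul _ _ (w.length : ℝ)
    fun j _ => abs_birkhoffSum_indicator_cyl_sub_le w fun r hr => ?_).trans (by simp))
  rw [shift_iterate_apply, add_comm, concat_sq_add ω hr]

lemma hasFreq_of_tendsto_birkhoffSum_sq_div {w : List Bool} {x : ℕ → Bool} {c : ℝ}
    (h : Tendsto (fun i : ℕ => birkhoffSum shift ((cyl w).indicator 1) (i ^ 2) x / (i : ℝ) ^ 2)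
      atTop (𝓝 c)) : hasFreq w x c := by
  refine tendsto_div_of_tendsto_sq_div
    (u := fun n => birkhoffSum shift ((cyl w).indicator 1) n x) (K := 1) (fun m n => ?_) h
  obtain ⟨h₀, h₁⟩ := birkhoffSum_indicator_mem_Icc shift (cyl w) n (shift^[m] x)
  rwa [birkhoffSum_add, add_sub_cancel_left, one_mul, abs_of_nonneg h₀]

lemma tendsto_birkhoffSum_concat_sub_div_sq (w : List Bool) (ω : ℕ → ℕ → Bool) :
    Tendsto (fun i : ℕ => (birkhoffSum shift ((cyl w).indicator 1) (i ^ 2) (concat ω) -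
      ∑ j ∈ Finset.range i, birkhoffSum shift ((cyl w).indicator 1) (2 * j + 1) (ω j)) /
        (i : ℝ) ^ 2) atTop (𝓝 0) := by
  refine squeeze_zero_norm (fun i => ?_) (tendsto_const_div_atTop_nhds_zero_nat (w.length : ℝ))
  rcases i.eq_zero_or_pos with rfl | hi
  · simp
  have hi : (0 : ℝ) < i := mod_cast hi
  rw [norm_div, norm_pow, Real.norm_natCast, Real.norm_eq_abs,
    div_le_div_iff₀ (by positivity) hi]
  nlinarith [abs_birkhoffSum_concat_sub_le w ω i]

lemma ae_hasFreq_concat {μ : Measure (ℕ → Bool)} [IsProbabilityMeasure μ]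
    (hμ : MeasurePreserving shift μ μ) (w : List Bool) :
    ∀ᵐ ω ∂Measure.infinitePi fun _ : ℕ => μ, hasFreq w (concat ω) (μ.real (cyl w)) := by
  have hw : MeasurableSet (cyl w) := (isClopen_cyl w).isOpen.measurableSet
  have hind : Measurable ((cyl w).indicator (1 : (ℕ → Bool) → ℝ)) := measurable_one.indicator hw
  have hint : Integrable ((cyl w).indicator (1 : (ℕ → Bool) → ℝ)) μ :=
    (integrable_const 1).indicator hw
  have hbd (j : ℕ) (x : ℕ → Bool) :
      |birkhoffSum shift ((cyl w).indicator 1) (2 * j + 1) x| ≤ (2 : ℝ) * (j + 1) := by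
    obtain ⟨h₀, h₁⟩ := birkhoffSum_indicator_mem_Icc shift (cyl w) (2 * j + 1) x
    push_cast at h₁
    exact (abs_of_nonneg h₀).trans_le (by linarith)
  filter_upwards [ae_tendsto_sum_sub_integral_div_sq μ
    (fun j => measurable_birkhoffSum hμ.measurable hind (2 * j + 1)) hbd] with ω hω
  refine hasFreq_of_tendsto_birkhoffSum_sq_div ?_
  have h := ((tendsto_birkhoffSum_concat_sub_div_sq w ω).add hω).add_const (μ.real (cyl w))
  rw [add_zero, zero_add] at h
  refine h.congr' ?_
  filter_upwards [eventually_gt_atTop 0] with i hi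
  rw [Finset.sum_sub_distrib, sum_integral_birkhoffSum_two_mul_add_one hμ hint,
    integral_indicator_one hw]
  field_simp
  ring

end Concatenation

/-! ### The lower bound -/

section TruncatedInformation

variable {Ω A : Type*} [MeasurableSpace Ω] {μ : Measure Ω} {f : Ω → A} {L : ℝ}

/-- The information function cut off at height `L`; unlike `info` it is bounded, so that
Hoeffding's inequality applies to it. -/
noncomputable def truncInfo (μ : Measure Ω) (f : Ω → A) (L : ℝ) (x : Ω) : ℝ :=
  min (info μ f x) L

lemma truncInfo_mem_Icc [IsProbabilityMeasure μ] (f : Ω → A) (hL : 0 ≤ L) (x : Ω) :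
    truncInfo μ f L x ∈ Icc 0 L :=
  ⟨le_min (info_nonneg f x) hL, min_le_right _ _⟩

lemma measureReal_fiber_le_exp_neg_truncInfo (f : Ω → A) (L : ℝ) (x : Ω) :
    μ.real (f ⁻¹' {f x}) ≤ Real.exp (-truncInfo μ f L x) := by
  rcases measureReal_nonneg.eq_or_lt with h | h
  · exact h.symm.trans_le (Real.exp_pos _).le
  · exact (Real.log_le_iff_le_exp h).1 (le_neg_of_le_neg (min_le_left (info μ f x) L))

lemma mul_neg_log_le_mul_min_add_exp {p : ℝ} (hp : 0 ≤ p) (L : ℝ) :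
    p * -Real.log p ≤ p * min (-Real.log p) L + Real.exp (-L) := by
  rcases hp.eq_or_lt with rfl | hp
  · simpa using (Real.exp_pos (-L)).le
  rcases le_total (-Real.log p) L with h | h
  · rw [min_eq_left h]
    linarith [Real.exp_pos (-L)]
  · rw [min_eq_right h]
    have hlog : 1 - p⁻¹ * Real.exp (-L) ≤ Real.log p + L := by
      have := Real.one_sub_inv_le_log_of_pos (mul_pos hp (Real.exp_pos L))
      rwa [Real.log_mul hp.ne' (Real.exp_pos L).ne', Real.log_exp, mul_inv, ← Real.exp_neg]
        at this
    have hmul := mul_le_mul_of_nonneg_left hlog hp.le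
    rw [mul_sub, mul_inv_cancel_left₀ hp.ne'] at hmul
    linarith

variable [MeasurableSpace A] [DiscreteMeasurableSpace A]

lemma measurable_truncInfo [Countable A] (hf : Measurable f) (L : ℝ) :
    Measurable (truncInfo μ f L) :=
  (measurable_info hf).min measurable_const

lemma integral_comp_eq_sum [IsFiniteMeasure μ] [Fintype A] (hf : Measurable f) (φ : A → ℝ) :
    ∫ x, φ (f x) ∂μ = ∑ a, μ.real (f ⁻¹' {a}) * φ a := by
  rw [← integral_map hf.aemeasurable (measurable_of_finite φ).aestronglyMeasurable,
    integral_fintype .of_finite]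
  simp only [map_measureReal_apply hf MeasurableSet.of_discrete, smul_eq_mul]

lemma toReal_shannon_le_integral_truncInfo [IsProbabilityMeasure μ] [Fintype A]
    (hf : Measurable f) (L : ℝ) :
    (shannon μ f).toReal ≤ ∫ x, truncInfo μ f L x ∂μ + Fintype.card A * Real.exp (-L) := by
  calc (shannon μ f).toReal
      = ∑ a, μ.real (f ⁻¹' {a}) * -Real.log (μ.real (f ⁻¹' {a})) := by
        rw [toReal_shannon hf]
        exact integral_comp_eq_sum hf fun a => -Real.log (μ.real (f ⁻¹' {a}))
    _ ≤ ∑ a, (μ.real (f ⁻¹' {a}) * min (-Real.log (μ.real (f ⁻¹' {a}))) L + Real.exp (-L)) :=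
        Finset.sum_le_sum fun a _ => mul_neg_log_le_mul_min_add_exp measureReal_nonneg L
    _ = ∫ x, truncInfo μ f L x ∂μ + Fintype.card A * Real.exp (-L) := by
        rw [Finset.sum_add_distrib, Finset.sum_const, Finset.card_univ, nsmul_eq_mul]
        congr 1
        exact (integral_comp_eq_sum hf fun a => min (-Real.log (μ.real (f ⁻¹' {a}))) L).symm

end TruncatedInformation

section BlockInformation

variable {Ω : Type*} [MeasurableSpace Ω] {T : Ω → Ω} {μ : Measure Ω} {s t : ℝ≥0}

lemma mul_le_toReal_blockEntropy {A : Type*} [Finite A] {ξ : Ω → A} (ht : t ≤ entropyRate T μ ξ)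
    (n : ℕ) : (t : ℝ) * n ≤ (blockEntropy T μ ξ n).toReal := by
  cases n with
  | zero => simp
  | succ n =>
    have hle : (t : ℝ≥0∞) * (n + 1 : ℕ) ≤ blockEntropy T μ ξ (n + 1) :=
      (ENNReal.le_div_iff_mul_le (by simp) (by simp)).1 (ht.trans (iInf_le _ n))
    have hreal := ENNReal.toReal_mono (blockEntropy_ne_top T μ ξ (n + 1)) hle
    rwa [ENNReal.toReal_mul, ENNReal.coe_toReal, ENNReal.toReal_natCast] at hreal

variable [IsProbabilityMeasure μ] {ξ : Ω → Bool}

lemma toReal_blockEntropy_le_integral_truncInfo (hT : Measurable T) (hξ : Measurable ξ) (n : ℕ) :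
    (blockEntropy T μ ξ n).toReal ≤ ∫ x, truncInfo μ (itinerary T ξ n) n x ∂μ + 1 := by
  have hexp : (2 : ℝ) ^ n ≤ Real.exp n := by
    rw [← Real.exp_one_pow]
    gcongr
    linarith [Real.add_one_le_exp 1]
  refine (toReal_shannon_le_integral_truncInfo (measurable_itinerary hT hξ n) n).trans ?_
  gcongr
  simpa [Real.exp_neg] using mul_inv_le_one_of_le₀ hexp (Real.exp_pos _).le

lemma sub_le_sum_integral_truncInfo (hT : Measurable T) (hξ : Measurable ξ)
    (ht : t ≤ entropyRate T μ ξ) (i : ℕ) :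
    t * (i : ℝ) ^ 2 - i ≤ ∑ j ∈ Finset.range i,
      ∫ x, truncInfo μ (itinerary T ξ (2 * j + 1)) (2 * j + 1 : ℕ) x ∂μ := by
  induction i with
  | zero => simp
  | succ i ih =>
    have hblock := (mul_le_toReal_blockEntropy ht (2 * i + 1)).trans
      (toReal_blockEntropy_le_integral_truncInfo hT hξ (2 * i + 1))
    rw [Finset.sum_range_succ]
    push_cast at hblock ih ⊢
    linarith

lemma ae_eventually_le_sum_truncInfo (hT : Measurable T) (hξ : Measurable ξ)
    (hs : s < entropyRate T μ ξ) :
    ∀ᵐ ω ∂Measure.infinitePi fun _ : ℕ => μ, ∀ᶠ n : ℕ in atTop,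
      (s : ℝ) * n ≤ ∑ j ∈ Finset.range (Nat.sqrt n),
        truncInfo μ (itinerary T ξ (2 * j + 1)) (2 * j + 1 : ℕ) (ω j) := by
  obtain ⟨t, hst, ht⟩ := ENNReal.lt_iff_exists_nnreal_btwn.1 hs
  have hst : (s : ℝ) < t := mod_cast hst
  have hbd (j : ℕ) (x : Ω) :
      |truncInfo μ (itinerary T ξ (2 * j + 1)) (2 * j + 1 : ℕ) x| ≤ 2 * (j + 1) := by
    obtain ⟨h₀, h₁⟩ := truncInfo_mem_Icc (μ := μ) (itinerary T ξ (2 * j + 1))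
      (Nat.cast_nonneg (2 * j + 1)) x
    rw [abs_of_nonneg h₀]
    push_cast at h₁ ⊢
    linarith
  filter_upwards [ae_tendsto_sum_sub_integral_div_sq μ
    (fun j => measurable_truncInfo (measurable_itinerary hT hξ (2 * j + 1)) (2 * j + 1 : ℕ)) hbd]
    with ω hω
  have hlim := hω.sub (tendsto_const_div_atTop_nhds_zero_nat (1 + 2 * (s : ℝ)))
  rw [sub_zero] at hlim
  have hev := (hlim.eventually_const_lt (sub_neg.2 hst)).and (eventually_gt_atTop 0)
  filter_upwards [tendsto_natSqrt_atTop.eventually hev] with n ⟨hlow, hpos⟩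
  have hn := natCast_le_sqrt_sq_add n
  generalize Nat.sqrt n = i at *
  have hpos : (0 : ℝ) < i := mod_cast hpos
  have hE := sub_le_sum_integral_truncInfo hT hξ ht.le i
  rw [Finset.sum_sub_distrib, lt_sub_iff_add_lt, lt_div_iff₀ (by positivity), add_mul,
    show (1 + 2 * (s : ℝ)) / i * (i : ℝ) ^ 2 = (1 + 2 * s) * i by field_simp] at hlow
  linarith [mul_le_mul_of_nonneg_left hn s.coe_nonneg]

end BlockInformation

section LowerBound

lemma itinerary_eq_of_itinerary_concat_eq {ω ω' : ℕ → ℕ → Bool} {n j : ℕ}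
    (h : itinerary shift firstSymbol n (concat ω) = itinerary shift firstSymbol n (concat ω'))
    (hj : j < Nat.sqrt n) :
    itinerary shift firstSymbol (2 * j + 1) (ω j) =
      itinerary shift firstSymbol (2 * j + 1) (ω' j) := by
  have hjn : j ^ 2 + (2 * j + 1) ≤ n :=
    calc j ^ 2 + (2 * j + 1) = (j + 1) ^ 2 := by ring
      _ ≤ n := (Nat.pow_le_pow_left hj 2).trans (Nat.sqrt_le' n)
  simp only [itinerary_shift, funext_iff] at h ⊢
  intro r
  rw [← concat_sq_add ω r.2, ← concat_sq_add ω' r.2]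
  exact h ⟨j ^ 2 + r, by omega⟩

variable {μ : Measure (ℕ → Bool)} [IsProbabilityMeasure μ]

lemma map_concat_itinerary_fiber_le (ω : ℕ → ℕ → Bool) (n : ℕ) :
    (Measure.infinitePi fun _ : ℕ => μ).map concat
        (itinerary shift firstSymbol n ⁻¹' {itinerary shift firstSymbol n (concat ω)}) ≤
      ENNReal.ofReal (Real.exp (-∑ j ∈ Finset.range (Nat.sqrt n),
        truncInfo μ (itinerary shift firstSymbol (2 * j + 1)) (2 * j + 1 : ℕ) (ω j))) := by
  have hmeas (m : ℕ) (u : Fin m → Bool) :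
      MeasurableSet (itinerary shift firstSymbol m ⁻¹' {u}) :=
    measurable_itinerary continuous_shift.measurable continuous_firstSymbol.measurable m
      MeasurableSet.of_discrete
  rw [Measure.map_apply measurable_concat (hmeas _ _)]
  calc _ ≤ Measure.infinitePi (fun _ : ℕ => μ) ((Finset.range (Nat.sqrt n) : Set ℕ).pi fun j =>
        itinerary shift firstSymbol (2 * j + 1) ⁻¹'
          {itinerary shift firstSymbol (2 * j + 1) (ω j)}) := by
        refine measure_mono fun ω' hω' j hj => ?_
        exact itinerary_eq_of_itinerary_concat_eq hω' (Finset.mem_range.1 hj)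
    _ = ∏ j ∈ Finset.range (Nat.sqrt n), μ (itinerary shift firstSymbol (2 * j + 1) ⁻¹'
          {itinerary shift firstSymbol (2 * j + 1) (ω j)}) :=
        Measure.infinitePi_pi _ fun j _ => hmeas _ _
    _ ≤ ∏ j ∈ Finset.range (Nat.sqrt n), ENNReal.ofReal (Real.exp
          (-truncInfo μ (itinerary shift firstSymbol (2 * j + 1)) (2 * j + 1 : ℕ) (ω j))) := by
        refine Finset.prod_le_prod' fun j _ => ?_
        rw [← ofReal_measureReal]
        exact ENNReal.ofReal_le_ofReal (measureReal_fiber_le_exp_neg_truncInfo _ _ _)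
    _ = _ := by
        rw [← ENNReal.ofReal_prod_of_nonneg fun _ _ => (Real.exp_pos _).le, ← Real.exp_sum,
          Finset.sum_neg_distrib]

theorem ksEntropy_le_bowenEntropy_setOf_hasFreq (hμ : MeasurePreserving shift μ μ) :
    ksEntropy shift μ ≤ bowenEntropy shift {x | ∀ w, hasFreq w x (μ.real (cyl w))} := by
  rw [ksEntropy_eq_entropyRate isGenerator_firstSymbol hμ continuous_firstSymbol.measurable]
  refine ENNReal.le_of_forall_nnreal_lt fun s hs => ?_
  set P := Measure.infinitePi fun _ : ℕ => μ
  refine le_bowenEntropy_of_measure_ne_zero (P.map concat) one_pos ?_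
  have hae : ∀ᵐ ω ∂P, concat ω ∈ {x ∈ {x | ∀ w, hasFreq w x (μ.real (cyl w))} |
      ∀ᶠ n : ℕ in atTop, ∀ c, x ∈ bowenBall shift c n 1 →
        P.map concat (bowenBall shift c n 1) ≤ ENNReal.ofReal (Real.exp (-s * n))} := by
    filter_upwards [ae_all_iff.2 (ae_hasFreq_concat hμ),
      ae_eventually_le_sum_truncInfo hμ.measurable continuous_firstSymbol.measurable hs]
      with ω hfreq hinfo
    refine ⟨hfreq, hinfo.mono fun n hn c hc => ?_⟩
    have hball : bowenBall shift c n 1 ⊆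
        itinerary shift firstSymbol n ⁻¹' {itinerary shift firstSymbol n (concat ω)} :=
      fun y hy => (itinerary_eq_of_mem_bowenBall_shift hy).symm.trans
        (itinerary_eq_of_mem_bowenBall_shift hc)
    refine (measure_mono hball).trans ((map_concat_itinerary_fiber_le ω n).trans ?_)
    gcongr
    linarith
  intro hzero
  have hpre := Measure.preimage_null_of_map_null measurable_concat.aemeasurable hzero
  exact (hae.and (measure_eq_zero_iff_ae_notMem.1 hpre)).exists.elim fun ω h => h.2 h.1

end LowerBound

/-! ### Recurrence sets -/

section Recurrence

variable {I : Set ℕ} {w : ℕ → List Bool} {a : ℕ → ℝ}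

/-- The set `M(a, W)` of shift-invariant probability measures giving mass `a i` to the cylinder
of `w i` for all `i ∈ I`, as a subset of the space of probability measures with the weak
topology. -/
def invariantWith (I : Set ℕ) (w : ℕ → List Bool) (a : ℕ → ℝ) :
    Set (ProbabilityMeasure (ℕ → Bool)) :=
  {μ | MeasurePreserving shift (μ : Measure (ℕ → Bool)) μ ∧
    ∀ i ∈ I, (μ : Measure (ℕ → Bool)).real (cyl (w i)) = a i}

lemma isCompact_invariantWith (I : Set ℕ) (w : ℕ → List Bool) (a : ℕ → ℝ) :
    IsCompact (invariantWith I w a) := by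
  have hmass : IsClosed {μ : ProbabilityMeasure (ℕ → Bool) |
      ∀ i ∈ I, (μ : Measure (ℕ → Bool)).real (cyl (w i)) = a i} := by
    simp only [Set.ofPred_forall]
    exact isClosed_biInter fun i _ =>
      isClosed_eq (continuous_real_of_isClopen (isClopen_cyl (w i))) continuous_const
  exact ((isClosed_setOf_measurePreserving continuous_shift).inter hmass).isCompact

lemma exists_mapClusterPt_mem_invariantWith {x : ℕ → Bool}
    (hx : ∀ i ∈ I, hasFreq (w i) x (a i)) :
    ∃ μ ∈ invariantWith I w a, MapClusterPt μ atTop (empiricalMeasure shift x) := by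
  obtain ⟨μ, hμ⟩ := exists_clusterPt_of_compactSpace (map (empiricalMeasure shift x) atTop)
  refine ⟨μ, ⟨measurePreserving_of_mapClusterPt continuous_shift hμ, fun i hi => ?_⟩, hμ⟩
  exact apply_eq_of_mapClusterPt_of_tendsto (u := empiricalMeasure shift x) hμ
    (continuous_real_of_isClopen (isClopen_cyl (w i)))
    (hasFreq_iff_tendsto_empiricalMeasure.1 (hx i hi))

lemma ksEntropy_le_bowenEntropy_of_mem_invariantWith {μ : ProbabilityMeasure (ℕ → Bool)}
    (hμ : μ ∈ invariantWith I w a) :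
    ksEntropy shift (μ : Measure (ℕ → Bool)) ≤
      bowenEntropy shift {x | ∀ i ∈ I, hasFreq (w i) x (a i)} :=
  (ksEntropy_le_bowenEntropy_setOf_hasFreq hμ.1).trans <|
    bowenEntropy_mono fun _ hx i hi => hμ.2 i hi ▸ hx (w i)

lemma bowenEntropy_setOf_hasFreq_le {t : ℝ≥0∞}
    (ht : ∀ μ ∈ invariantWith I w a, ksEntropy shift (μ : Measure (ℕ → Bool)) ≤ t) :
    bowenEntropy shift {x | ∀ i ∈ I, hasFreq (w i) x (a i)} ≤ t :=
  bowenEntropy_shift_le fun _ hx =>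
    let ⟨μ, hμ, hcl⟩ := exists_mapClusterPt_mem_invariantWith hx
    ⟨μ, hcl, ht μ hμ⟩

end Recurrence

/-- **Corollary 5.1.** For the full shift on `{0,1}^ℕ`, a countable family of words
`(w_i)_{i∈I}` and prescribed frequencies `(a_i)_{i∈I}`, the Bowen entropy of the
recurrence set `R(a;W)` equals the supremum (a maximum, attained whenever `M(a,W) ≠ ∅`)
of `h_μ` over invariant probability measures with `μ([w_i]) = a_i` for all `i ∈ I`. -/
theorem entropy_of_recurrence_set (I : Set ℕ) (w : ℕ → List Bool) (a : ℕ → ℝ)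
    (ha : ∀ i ∈ I, 0 ≤ a i) :
    bowenEntropy shift {x : ℕ → Bool | ∀ i ∈ I, hasFreq (w i) x (a i)} =
      (⨆ μ ∈ {μ : Measure (ℕ → Bool) | IsProbabilityMeasure μ ∧
          MeasurePreserving shift μ μ ∧ ∀ i ∈ I, (μ (cyl (w i))).toReal = a i},
        ksEntropy shift μ) ∧
    ({μ : Measure (ℕ → Bool) | IsProbabilityMeasure μ ∧
        MeasurePreserving shift μ μ ∧ ∀ i ∈ I, (μ (cyl (w i))).toReal = a i}.Nonempty →
      ∃ μ ∈ {μ : Measure (ℕ → Bool) | IsProbabilityMeasure μ ∧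
          MeasurePreserving shift μ μ ∧ ∀ i ∈ I, (μ (cyl (w i))).toReal = a i},
        ksEntropy shift μ =
          ⨆ ν ∈ {ν : Measure (ℕ → Bool) | IsProbabilityMeasure ν ∧
            MeasurePreserving shift ν ν ∧ ∀ i ∈ I, (ν (cyl (w i))).toReal = a i},
          ksEntropy shift ν) := by
  refine ⟨le_antisymm (bowenEntropy_setOf_hasFreq_le fun μ hμ => ?_)
    (iSup₂_le fun μ ⟨hp, hμ⟩ => ?_), fun ⟨μ, hp, hμ⟩ => ?_⟩
  · exact le_iSup₂ (f := fun ν _ => ksEntropy shift ν) (μ : Measure (ℕ → Bool))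
      ⟨inferInstance, hμ⟩
  · exact ksEntropy_le_bowenEntropy_of_mem_invariantWith (μ := ⟨μ, hp⟩) hμ
  · obtain ⟨ν, hν, hmax⟩ := exists_forall_ksEntropy_le isGenerator_firstSymbol continuous_shift
      continuous_firstSymbol (isCompact_invariantWith I w a) ⟨⟨μ, hp⟩, hμ⟩ fun _ h => h.1
    refine ⟨ν, ⟨inferInstance, hν⟩, le_antisymm ?_ (iSup₂_le fun ρ ⟨hρ, h⟩ => ?_)⟩
    · exact le_iSup₂ (f := fun ρ _ => ksEntropy shift ρ) (ν : Measure (ℕ → Bool))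
        ⟨inferInstance, hν⟩
    · exact hmax ⟨ρ, hρ⟩ h
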